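/- arXiv:1604.07293 — 2 statements merged into one kernel-verified Lean document; each statement's English description precedes it below -/
import Mathlib

section
/- Under the Setup, if T has finite topological entropy, i.e. h_top(T) < ∞, then mdim(T) = 0. -/
open MeasureTheory Set Filter Topology
open scoped ENNReal

section Defs

variable {Ω X Y : Type*}

/-- The fiber of a set `E ⊆ Ω × X` over `ω`. -/
def fiber (E : Set (Ω × X)) (ω : Ω) : Set X := {x | (ω, x) ∈ E}

/-- The iterates `T^n_ω = T_{θ^{n-1}ω} ∘ ⋯ ∘ T_ω` of a bundle RDS. -/
def itr (T : Ω → X → X) (θ : Ω → Ω) : ℕ → Ω → X → X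
  | 0, _ => id
  | n + 1, ω => itr T θ n (θ ω) ∘ T ω

/-- Two families of sets with common index set are combinatorially equivalent if
the corresponding sub-intersections are simultaneously nonempty. -/
def CombEquiv {ι : Type*} (A B : ι → Set Y) : Prop :=
  ∀ J : Set ι, (⋂ i ∈ J, A i).Nonempty ↔ (⋂ i ∈ J, B i).Nonempty

section Top

variable [TopologicalSpace X] [TopologicalSpace Y]

/-- A family of open sets covering the whole space. -/
def IsOpenCover {ι : Type*} (U : ι → Set X) : Prop :=
  (∀ i, IsOpen (U i)) ∧ (⋃ i, U i) = univ

/-- A family of relatively open subsets of `K` covering `K`. -/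
def IsOpenCoverOn (K : Set X) {ι : Type*} (U : ι → Set X) : Prop :=
  (∀ i, ∃ V : Set X, IsOpen V ∧ U i = V ∩ K) ∧ K ⊆ ⋃ i, U i

/-- `1 + ord`: the maximal multiplicity `sup_{x ∈ K} Σ_i 1_{U i}(x)` of the family `U` on `K`. -/
noncomputable def multOn (K : Set X) {ι : Type*} [Fintype ι] (U : ι → Set X) : ℕ :=
  sSup {m | ∃ x ∈ K, m = Nat.card {i // x ∈ U i}}

/-- `ord(U) = -1 + sup_{x ∈ K} Σ_i 1_{U i}(x)` (as a truncated natural number). -/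
noncomputable def ordOn (K : Set X) {ι : Type*} [Fintype ι] (U : ι → Set X) : ℕ :=
  multOn K U - 1

/-- `V` refines `U` if every member of `V` is contained in some member of `U`. -/
def Refines {ι κ : Type*} (V : κ → Set X) (U : ι → Set X) : Prop :=
  ∀ j, ∃ i, V j ⊆ U i

/-- `D(U) = min { ord(V) : V a finite relatively open cover of K refining U }`. -/
noncomputable def DOn (K : Set X) {ι : Type*} [Fintype ι] (U : ι → Set X) : ℕ :=
  sInf {q | ∃ (m : ℕ) (V : Fin m → Set X),
    IsOpenCoverOn K V ∧ Refines V U ∧ ordOn K V = q}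

/-- `f : X → Y` is `U`-compatible if some finite open cover of `Y` pulls back to
a refinement of `U`. -/
def Compatible {ι : Type*} (U : ι → Set X) (f : X → Y) : Prop :=
  ∃ (m : ℕ) (W : Fin m → Set Y), IsOpenCover W ∧ Refines (fun j => f ⁻¹' (W j)) U

/-- The covering dimension `dim Y = sup { D(V) : V a finite open cover of Y }`. -/
noncomputable def covDim (Z : Type*) [TopologicalSpace Z] : ℕ∞ :=
  ⨆ (m : ℕ) (V : Fin m → Set Z) (_ : IsOpenCover V), (DOn (univ : Set Z) V : ℕ∞)

/-- The dynamical cover `α_0^{n-1}(ω|E) = ⋁_{i=0}^{n-1} (T^i_ω)⁻¹ α(θ^i ω|E)` of the fiber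
`E_ω`, indexed by `Fin n → ι`. -/
def dynCover (T : Ω → X → X) (θ : Ω → Ω) (E : Set (Ω × X)) {ι : Type*}
    (U : ι → Set X) (n : ℕ) (ω : Ω) : (Fin n → ι) → Set X :=
  fun j => fiber E ω ∩
    ⋂ i : Fin n, (itr T θ (i : ℕ) ω) ⁻¹' (U (j i) ∩ fiber E (θ^[(i : ℕ)] ω))

end Top

/-- `Σ_{i=0}^{n-1} 1_A (T^i_ω x)`: the number of times the orbit of `x` up to time `n`
visits `A`. -/
noncomputable def orbCount (T : Ω → X → X) (θ : Ω → Ω) (A : Set X)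
    (n : ℕ) (ω : Ω) (x : X) : ℕ :=
  Nat.card {i : Fin n // itr T θ (i : ℕ) ω x ∈ A}

/-- `b_n(ω) = sup_{x ∈ E_ω} Σ_{i=0}^{n-1} 1_A (T^i_ω x)`. -/
noncomputable def bsup (T : Ω → X → X) (θ : Ω → Ω) (E : Set (Ω × X)) (A : Set X)
    (n : ℕ) (ω : Ω) : ℕ :=
  sSup {m | ∃ x ∈ fiber E ω, m = orbCount T θ A n ω x}

/-- The `ω`-orbit capacity `ocap^ω(A) = lim_{n→∞} (1/n) b_n(ω)` (as a `limsup`). -/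
noncomputable def ocap (T : Ω → X → X) (θ : Ω → Ω) (E : Set (Ω × X)) (A : Set X)
    (ω : Ω) : ℝ :=
  Filter.atTop.limsup (fun n : ℕ => (bsup T θ E A n ω : ℝ) / n)

section Metric

variable [PseudoMetricSpace X]

/-- The Bowen-type metric `d^ω_{ε,n}(x,y) = max_{0 ≤ k < n} d(T^k_ω x, T^k_ω y)/ε`. -/
noncomputable def dBowen (T : Ω → X → X) (θ : Ω → Ω) (ε : ℝ) (n : ℕ) (ω : Ω)
    (x y : X) : ℝ :=
  ⨆ k : Fin n, dist (itr T θ (k : ℕ) ω x) (itr T θ (k : ℕ) ω y) / ε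

/-- The diameter of a set with respect to a (not necessarily standard) metric `ρ`. -/
noncomputable def diamIn (ρ : X → X → ℝ) (A : Set X) : ℝ :=
  sSup {r | ∃ x ∈ A, ∃ y ∈ A, r = ρ x y}

/-- `cov(ω,ε,n)`: the minimal cardinality of a cover of `E_ω` by sets of
`d^ω_{ε,n}`-diameter strictly less than 1. -/
noncomputable def covN (T : Ω → X → X) (θ : Ω → Ω) (E : Set (Ω × X))
    (ε : ℝ) (n : ℕ) (ω : Ω) : ℕ :=
  sInf {m | ∃ A : Fin m → Set X, fiber E ω ⊆ (⋃ j, A j) ∧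
    ∀ j, diamIn (dBowen T θ ε n ω) (A j) < 1}

/-- `sep(ω,ε,n)`: the maximal cardinality of a subset of `E_ω` whose distinct points are
at `d^ω_{ε,n}`-distance at least 1. -/
noncomputable def sepN (T : Ω → X → X) (θ : Ω → Ω) (E : Set (Ω × X))
    (ε : ℝ) (n : ℕ) (ω : Ω) : ℕ :=
  sSup {m | ∃ F : Finset X, (F : Set X) ⊆ fiber E ω ∧ F.card = m ∧
    ∀ x ∈ F, ∀ y ∈ F, x ≠ y → 1 ≤ dBowen T θ ε n ω x y}

/-- `S'(ω,ε) = limsup_{n→∞} (1/n) log sep(ω,ε,n)`. -/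
noncomputable def Ssep (T : Ω → X → X) (θ : Ω → Ω) (E : Set (Ω × X))
    (ω : Ω) (ε : ℝ) : ℝ :=
  Filter.atTop.limsup (fun n : ℕ => Real.log (sepN T θ E ε n ω) / n)

/-- `S(ω,ε) = lim_{n→∞} (1/n) log cov(ω,ε,n)` (the limit exists by subadditivity and
equals the `limsup`). -/
noncomputable def Scov (T : Ω → X → X) (θ : Ω → Ω) (E : Set (Ω × X))
    (ω : Ω) (ε : ℝ) : ℝ :=
  Filter.atTop.limsup (fun n : ℕ => Real.log (covN T θ E ε n ω) / n)

/-- The fiberwise metric mean dimension computed from separated sets: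
`liminf_{1 > ε → 0⁺} S'(ω,ε)/(-log ε)`. -/
noncomputable def mdimMfibSep (T : Ω → X → X) (θ : Ω → Ω) (E : Set (Ω × X)) (ω : Ω) : ℝ :=
  Filter.liminf (fun ε => Ssep T θ E ω ε / (-Real.log ε)) (nhdsWithin 0 (Ioo (0:ℝ) 1))

/-- The fiberwise metric mean dimension `mdim_M(T,ω) = liminf_{1 > ε → 0⁺} S(ω,ε)/(-log ε)`. -/
noncomputable def mdimMfibCov (T : Ω → X → X) (θ : Ω → Ω) (E : Set (Ω × X)) (ω : Ω) : ℝ :=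
  Filter.liminf (fun ε => Scov T θ E ω ε / (-Real.log ε)) (nhdsWithin 0 (Ioo (0:ℝ) 1))

/-- The topological entropy `h_top(T) = ∫_Ω sup_{0<ε<1} S'(ω,ε) dP(ω)`. -/
noncomputable def htop (T : Ω → X → X) (θ : Ω → Ω) (E : Set (Ω × X))
    {mΩ : MeasurableSpace Ω} (P : Measure Ω) : ℝ≥0∞ :=
  ∫⁻ ω, ⨆ ε : Ioo (0:ℝ) 1, ENNReal.ofReal (Ssep T θ E ω (ε : ℝ)) ∂P

end Metric

section Mdim

variable [TopologicalSpace X] {mΩ : MeasurableSpace Ω}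

/-- The mean topological dimension with respect to the cover `U`:
`mdim(T,α) = lim_{n→∞} (1/n) ∫_Ω D(α_0^{n-1}(ω|E)) dP(ω)` (the limit exists by
subadditivity and equals the `liminf`). -/
noncomputable def mdimCov (P : Measure Ω) (T : Ω → X → X) (θ : Ω → Ω) (E : Set (Ω × X))
    {ι : Type*} [Fintype ι] (U : ι → Set X) : ℝ≥0∞ :=
  Filter.atTop.liminf (fun n : ℕ =>
    (∫⁻ ω, (DOn (fiber E ω) (dynCover T θ E U n ω) : ℝ≥0∞) ∂P) / (n : ℝ≥0∞))

/-- The mean topological dimension `mdim(T) = sup_α mdim(T,α)` over finite open covers. -/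
noncomputable def mdim (P : Measure Ω) (T : Ω → X → X) (θ : Ω → Ω)
    (E : Set (Ω × X)) : ℝ≥0∞ :=
  ⨆ (m : ℕ) (U : Fin m → Set X) (_ : IsOpenCover U), mdimCov P T θ E U

end Mdim

end Defs


section CoverOrder

variable {I : Type*}

/-- The open cell of points whose coordinates with `σ i = 0` are positive and strictly closer to
the base point `ξ` than the others, which lie on the side of `ξ` prescribed by `σ`. -/
def signCell (ξ : I → ℝ) (σ : I → SignType) : Set (I → ℝ) :=
  {y | (∀ i, σ i = 0 → 0 < y i) ∧ (∀ i j, σ i = 0 → σ j ≠ 0 → |y i - ξ i| < |y j - ξ j|) ∧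
    (∀ i, σ i = 1 → ξ i < y i) ∧ ∀ i, σ i = -1 → y i < ξ i}

theorem isOpen_signCell [Finite I] (ξ : I → ℝ) (σ : I → SignType) : IsOpen (signCell ξ σ) := by
  have h : signCell ξ σ = (⋂ i, ⋂ (_ : σ i = 0), {y | 0 < y i}) ∩
      ((⋂ i, ⋂ j, ⋂ (_ : σ i = 0), ⋂ (_ : σ j ≠ 0), {y | |y i - ξ i| < |y j - ξ j|}) ∩
      ((⋂ i, ⋂ (_ : σ i = 1), {y | ξ i < y i}) ∩ ⋂ i, ⋂ (_ : σ i = -1), {y | y i < ξ i})) := by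
    ext y; simp [signCell]
  rw [h]
  refine .inter ?_ (.inter ?_ (.inter ?_ ?_))
  · exact isOpen_iInter_of_finite fun i => isOpen_iInter_of_finite fun _ =>
      isOpen_lt (by fun_prop) (by fun_prop)
  · exact isOpen_iInter_of_finite fun i => isOpen_iInter_of_finite fun j =>
      isOpen_iInter_of_finite fun _ => isOpen_iInter_of_finite fun _ =>
      isOpen_lt (by fun_prop) (by fun_prop)
  · exact isOpen_iInter_of_finite fun i => isOpen_iInter_of_finite fun _ =>
      isOpen_lt (by fun_prop) (by fun_prop)
  · exact isOpen_iInter_of_finite fun i => isOpen_iInter_of_finite fun _ =>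
      isOpen_lt (by fun_prop) (by fun_prop)

theorem mem_signCell_sign {ξ : I → ℝ} (hξ : ∀ i, 0 < ξ i) (y : I → ℝ) :
    y ∈ signCell ξ fun i => SignType.sign (y i - ξ i) := by
  refine ⟨fun i hi => ?_, fun i j hi hj => ?_, fun i hi => ?_, fun i hi => ?_⟩
  · rw [sign_eq_zero_iff, sub_eq_zero] at hi
    exact hi ▸ hξ i
  · rw [sign_eq_zero_iff] at hi
    rw [ne_eq, sign_eq_zero_iff] at hj
    simpa [hi] using hj
  · simpa [sign_eq_one_iff] using hi
  · simpa [sign_eq_neg_one_iff] using hi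

theorem eq_of_mem_signCell [Finite I] {ξ : I → ℝ} {σ τ : I → SignType} {y : I → ℝ}
    (hσ : y ∈ signCell ξ σ) (hτ : y ∈ signCell ξ τ)
    (h : Nat.card {i // σ i = 0} = Nat.card {i // τ i = 0}) : σ = τ := by
  have hzero : {i | σ i = 0} = {i | τ i = 0} := by
    by_contra hne
    have h1 : ¬ {i | σ i = 0} ⊆ {i | τ i = 0} := fun hs =>
      hne (Set.eq_of_subset_of_ncard_le hs h.ge)
    have h2 : ¬ {i | τ i = 0} ⊆ {i | σ i = 0} := fun hs =>
      hne (Set.eq_of_subset_of_ncard_le hs h.le).symm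
    obtain ⟨i, hi, hi'⟩ := Set.not_subset.1 h1
    obtain ⟨j, hj, hj'⟩ := Set.not_subset.1 h2
    exact lt_asymm (hσ.2.1 i j hi hj') (hτ.2.1 j i hj hi')
  funext i
  have hi : σ i = 0 ↔ τ i = 0 := Set.ext_iff.1 hzero i
  have a1 := hσ.2.2.1 i
  have a2 := hσ.2.2.2 i
  have b1 := hτ.2.2.1 i
  have b2 := hτ.2.2.2 i
  cases hs : σ i <;> cases ht : τ i <;> simp_all
  · exact absurd a2 (lt_asymm b1)
  · exact absurd a1 (lt_asymm b2)

/-- If a continuous map to a cube meets the hyperplanes through `ξ` at most `d` at a time, then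
the pullback of its sign cells witnesses `D ≤ d`. -/
theorem DOn_le_of_signCell [Finite I] {X ι : Type*} [TopologicalSpace X] [Fintype ι] {K : Set X}
    {U : ι → Set X} {Φ : X → I → ℝ} (hΦ : ContinuousOn Φ K) {ξ : I → ℝ} (hξ : ∀ i, 0 < ξ i)
    {d : ℕ} (hd : ∀ x ∈ K, Nat.card {i // Φ x i = ξ i} ≤ d)
    (hU : ∀ σ, ∃ j, Φ ⁻¹' signCell ξ σ ∩ K ⊆ U j) : DOn K U ≤ d := by
  classical
  have := Fintype.ofFinite I
  let S := {σ : I → SignType // Nat.card {i // σ i = 0} ≤ d}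
  let e : Fin (Fintype.card S) ≃ S := (Fintype.equivFin S).symm
  let V : Fin (Fintype.card S) → Set X := fun k => Φ ⁻¹' signCell ξ (e k).1 ∩ K
  have hV : IsOpenCoverOn K V := by
    refine ⟨fun k => ?_, fun x hx => ?_⟩
    · obtain ⟨O, hO, hO'⟩ := continuousOn_iff'.1 hΦ _ (isOpen_signCell ξ (e k).1)
      exact ⟨O, hO, hO'⟩
    · have hc : Nat.card {i // SignType.sign (Φ x i - ξ i) = 0} ≤ d := by
        simpa [sign_eq_zero_iff, sub_eq_zero] using hd x hx
      refine mem_iUnion.2 ⟨e.symm ⟨_, hc⟩, ?_⟩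
      simpa [V, hx] using mem_signCell_sign hξ (Φ x)
  have hmult : multOn K V ≤ d + 1 := by
    refine csSup_le' ?_
    rintro _ ⟨x, hx, rfl⟩
    have hinj : Function.Injective fun k : {k // x ∈ V k} =>
        (⟨Nat.card {i // (e k.1).1 i = 0}, Nat.lt_succ_of_le (e k.1).2⟩ : Fin (d + 1)) := by
      intro k l hkl
      exact Subtype.ext (e.injective (Subtype.ext
        (eq_of_mem_signCell k.2.1 l.2.1 (Fin.mk.inj hkl))))
    simpa using Nat.card_le_card_of_injective _ hinj
  have hD : DOn K U ≤ ordOn K V := Nat.sInf_le ⟨_, V, hV, fun k => hU _, rfl⟩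
  rw [ordOn] at hD
  omega

end CoverOrder

section Counting

/-- If `|s| * 2 ^ |I| < q ^ (d + 1)`, some grid point agrees with each of the partial grid points
prescribed by `R k`, `k ∈ s`, in at most `d` coordinates. -/
theorem exists_card_coincidence_le {I κ : Type*} [Fintype I] {q d : ℕ} (hq : 0 < q)
    (s : Finset κ) (R : κ → I → Fin q → Prop)
    (hR : ∀ k i a b, R k i a → R k i b → a = b) (h : s.card * 2 ^ Fintype.card I < q ^ (d + 1)) :
    ∃ ξ : I → Fin q, ∀ k ∈ s, Nat.card {i // R k i (ξ i)} ≤ d := by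
  classical
  by_contra! hcon
  have hprod : ∀ k (ξ : I → Fin q), ∏ i, (if R k i (ξ i) then q else 1) =
      q ^ Nat.card {i // R k i (ξ i)} := by
    intro k ξ
    rw [Finset.prod_ite]
    simp [Fintype.card_subtype]
  have hrow : ∀ k i, ∑ a : Fin q, (if R k i a then q else 1) ≤ 2 * q := by
    intro k i
    calc ∑ a : Fin q, (if R k i a then q else 1)
        ≤ ∑ a : Fin q, ((if R k i a then q else 0) + 1) := by
          gcongr; split_ifs <;> simp
      _ = (Finset.univ.filter (R k i)).card * q + q := by
          simp [Finset.sum_add_distrib, Finset.sum_ite]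
      _ ≤ 1 * q + q := by
          gcongr
          exact Finset.card_le_one.2 fun a ha b hb => hR k i a b (by simpa using ha)
            (by simpa using hb)
      _ = 2 * q := by ring
  have hsum : ∀ k, ∑ ξ : I → Fin q, q ^ Nat.card {i // R k i (ξ i)} ≤
      (2 * q) ^ Fintype.card I := by
    intro k
    simp_rw [← hprod]
    have := Finset.prod_univ_sum (fun _ : I => (Finset.univ : Finset (Fin q)))
      (fun i a => if R k i a then q else 1)
    rw [Fintype.piFinset_univ] at this
    rw [← this, ← Finset.card_univ, ← Finset.prod_const]
    exact Finset.prod_le_prod' fun i _ => hrow k i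
  have key : q ^ Fintype.card I * q ^ (d + 1) ≤ s.card * (2 * q) ^ Fintype.card I := by
    calc q ^ Fintype.card I * q ^ (d + 1) = ∑ _ξ : I → Fin q, q ^ (d + 1) := by simp
      _ ≤ ∑ ξ : I → Fin q, ∑ k ∈ s, q ^ Nat.card {i // R k i (ξ i)} := by
          refine Finset.sum_le_sum fun ξ _ => ?_
          obtain ⟨k, hk, hlt⟩ := hcon ξ
          exact (Nat.pow_le_pow_right hq hlt).trans
            (Finset.single_le_sum (f := fun k => q ^ Nat.card {i // R k i (ξ i)})
              (fun _ _ => Nat.zero_le _) hk)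
      _ = ∑ k ∈ s, ∑ ξ : I → Fin q, q ^ Nat.card {i // R k i (ξ i)} := Finset.sum_comm
      _ ≤ ∑ _k ∈ s, (2 * q) ^ Fintype.card I := Finset.sum_le_sum fun k _ => hsum k
      _ = s.card * (2 * q) ^ Fintype.card I := by simp
  have hpos : 0 < q ^ Fintype.card I := by positivity
  rw [mul_pow] at key
  nlinarith

end Counting

section Dynamics

variable {Ω X : Type*} {T : Ω → X → X} {θ : Ω → Ω} {E : Set (Ω × X)}

theorem mapsTo_itr {ω : Ω}
    (h : ∀ k, MapsTo (T (θ^[k] ω)) (fiber E (θ^[k] ω)) (fiber E (θ (θ^[k] ω)))) (n : ℕ) :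
    MapsTo (itr T θ n ω) (fiber E ω) (fiber E (θ^[n] ω)) := by
  induction n generalizing ω with
  | zero => exact mapsTo_id _
  | succ n ih => exact (ih (ω := θ ω) fun k => h (k + 1)).comp (h 0)

theorem continuousOn_itr [TopologicalSpace X] {ω : Ω}
    (h : ∀ k, MapsTo (T (θ^[k] ω)) (fiber E (θ^[k] ω)) (fiber E (θ (θ^[k] ω))))
    (hc : ∀ k, ContinuousOn (T (θ^[k] ω)) (fiber E (θ^[k] ω))) (n : ℕ) :
    ContinuousOn (itr T θ n ω) (fiber E ω) := by
  induction n generalizing ω with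
  | zero => exact continuousOn_id
  | succ n ih =>
    exact (ih (ω := θ ω) (fun k => h (k + 1)) fun k => hc (k + 1)).comp (hc 0) (h 0)

theorem DOn_dynCover_le [TopologicalSpace X] {ι : Type*} [Fintype ι] {U : ι → Set X}
    {f : X → ι → ℝ} (hf : Continuous f) (hfU : ∀ i x, 0 < f x i → x ∈ U i)
    (hf1 : ∀ x, ∃ i, f x i = 1) {ω : Ω} (hne : (fiber E ω).Nonempty)
    (hm : ∀ k, MapsTo (T (θ^[k] ω)) (fiber E (θ^[k] ω)) (fiber E (θ (θ^[k] ω))))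
    (hc : ∀ k, ContinuousOn (T (θ^[k] ω)) (fiber E (θ^[k] ω))) {n d : ℕ}
    {ξ : Fin n × ι → ℝ} (hξ : ∀ i, ξ i ∈ Ioo (0 : ℝ) 1)
    (hd : ∀ x ∈ fiber E ω, Nat.card {i : Fin n × ι // f (itr T θ i.1 ω x) i.2 = ξ i} ≤ d) :
    DOn (fiber E ω) (dynCover T θ E U n ω) ≤ d := by
  refine DOn_le_of_signCell (Φ := fun x i => f (itr T θ i.1 ω x) i.2) (ξ := ξ) ?_
    (fun i => (hξ i).1) hd fun σ => ?_
  · refine continuousOn_pi.2 fun i => ?_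
    exact ((continuous_apply i.2).comp hf).comp_continuousOn (continuousOn_itr hm hc i.1)
  by_cases hσ : ∀ t, ∃ i, σ (t, i) ≠ -1
  · choose j hj using hσ
    refine ⟨j, fun x hx => ⟨hx.2, mem_iInter.2 fun t => ⟨hfU _ _ ?_, mapsTo_itr hm t hx.2⟩⟩⟩
    obtain ⟨h0, -, h1, -⟩ := hx.1
    rcases h : σ (t, j t) with _ | _ | _
    · exact h0 _ h
    · exact absurd h (hj t)
    · exact (hξ _).1.trans (h1 _ h)
  · push Not at hσ
    obtain ⟨t, ht⟩ := hσ
    obtain ⟨x₀, -⟩ := hne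
    obtain ⟨i₀, -⟩ := hf1 x₀
    refine ⟨fun _ => i₀, fun x hx => ?_⟩
    obtain ⟨i, hi⟩ := hf1 (itr T θ t ω x)
    have := (hx.1.2.2.2 (t, i) (ht i)).trans (hξ _).2
    exact absurd hi this.ne

theorem exists_continuous_subordinate [PseudoMetricSpace X] [CompactSpace X] {ι : Type*}
    {U : ι → Set X} (hU : IsOpenCover U) :
    ∃ f : X → ι → ℝ, Continuous f ∧ (∀ i x, 0 < f x i → x ∈ U i) ∧ ∀ x, ∃ i, f x i = 1 := by
  obtain ⟨δ, hδ, hball⟩ := lebesgue_number_lemma_of_metric isCompact_univ hU.1 hU.2.ge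
  let C : ι → Set X := fun i => {x | Metric.ball x δ ⊆ U i}
  refine ⟨fun x i => (thickenedIndicator hδ (C i) x : ℝ), by fun_prop, fun i x hx => ?_,
    fun x => ?_⟩
  · by_contra hxU
    have : x ∉ Metric.thickening δ (C i) := by
      rw [Metric.mem_thickening_iff]
      rintro ⟨z, hz, hxz⟩
      exact hxU (hz hxz)
    simp [thickenedIndicator_zero hδ (C i) this] at hx
  · obtain ⟨i, hi⟩ := hball x (mem_univ x)
    exact ⟨i, by simp [thickenedIndicator_one hδ (C i) hi]⟩

section Separated

variable [PseudoMetricSpace X]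

theorem dBowen_lt_one {ε : ℝ} (hε : 0 < ε) {n : ℕ} {ω : Ω} {x y : X}
    (h : ∀ k : Fin n, dist (itr T θ k ω x) (itr T θ k ω y) < ε) : dBowen T θ ε n ω x y < 1 := by
  rw [dBowen]
  rcases isEmpty_or_nonempty (Fin n) with hn | hn
  · simp
  · obtain ⟨k, hk⟩ := exists_eq_ciSup_of_finite
      (f := fun k : Fin n => dist (itr T θ k ω x) (itr T θ k ω y) / ε)
    rw [← hk, div_lt_one hε]
    exact h k

theorem dist_lt_of_dBowen_lt_one {ε : ℝ} (hε : 0 < ε) {n : ℕ} {ω : Ω} {x y : X}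
    (h : dBowen T θ ε n ω x y < 1) (k : Fin n) :
    dist (itr T θ k ω x) (itr T θ k ω y) < ε := by
  rw [← div_lt_one hε]
  exact (le_ciSup (f := fun k : Fin n => dist (itr T θ k ω x) (itr T θ k ω y) / ε)
    (finite_range _).bddAbove k).trans_lt h

variable [CompactSpace X]

theorem exists_card_le_pow_of_separated (T : Ω → X → X) (θ : Ω → Ω) {ε : ℝ} (hε : 0 < ε) :
    ∃ N : ℕ, 0 < N ∧ ∀ (n : ℕ) (ω : Ω) (F : Finset X),
      (∀ x ∈ F, ∀ y ∈ F, x ≠ y → 1 ≤ dBowen T θ ε n ω x y) → F.card ≤ N ^ n := by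
  obtain ⟨t, -, ht, hcov⟩ := Metric.finite_approx_of_totallyBounded
    (isCompact_univ (X := X)).totallyBounded (ε / 2) (half_pos hε)
  have := ht.fintype
  have hc : ∀ x : X, ∃ c : t, dist x c < ε / 2 := fun x => by
    simpa using hcov (mem_univ x)
  choose c hc using hc
  refine ⟨Fintype.card t + 1, Nat.succ_pos _, fun n ω F hF => ?_⟩
  have hinj : Function.Injective fun (x : F) (k : Fin n) => c (itr T θ k ω x) := by
    intro x y hxy
    by_contra hne
    refine (hF x x.2 y y.2 fun h => hne (Subtype.ext h)).not_gt (dBowen_lt_one hε fun k => ?_)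
    have h1 := hc (itr T θ k ω x)
    have h2 := hc (itr T θ k ω y)
    rw [show c (itr T θ k ω y) = c (itr T θ k ω x) from (congr_fun hxy k).symm] at h2
    linarith [dist_triangle_right (itr T θ k ω x) (itr T θ k ω y) (c (itr T θ k ω x))]
  calc F.card ≤ Fintype.card t ^ n := by simpa using Fintype.card_le_of_injective _ hinj
    _ ≤ _ := Nat.pow_le_pow_left (Nat.le_succ _) n

theorem exists_finset_card_eq_sepN (T : Ω → X → X) (θ : Ω → Ω) (E : Set (Ω × X)) {ε : ℝ}
    (hε : 0 < ε) (n : ℕ) (ω : Ω) :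
    ∃ F : Finset X, F.card = sepN T θ E ε n ω ∧
      ∀ x ∈ fiber E ω, ∃ z ∈ F, ∀ k : Fin n, dist (itr T θ k ω x) (itr T θ k ω z) < ε := by
  classical
  obtain ⟨N, -, hN⟩ := exists_card_le_pow_of_separated T θ hε
  let S : Set ℕ := {m | ∃ F : Finset X, (F : Set X) ⊆ fiber E ω ∧ F.card = m ∧
    ∀ x ∈ F, ∀ y ∈ F, x ≠ y → 1 ≤ dBowen T θ ε n ω x y}
  have hne : S.Nonempty := ⟨0, ∅, by simp⟩
  have hbdd : BddAbove S := by
    refine ⟨N ^ n, ?_⟩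
    rintro _ ⟨F, -, rfl, hF⟩
    exact hN n ω F hF
  obtain ⟨F, hFE, hFc, hF⟩ := Nat.sSup_mem hne hbdd
  refine ⟨F, hFc, fun x hx => ?_⟩
  by_contra! hcon
  have hfar : ∀ z ∈ F, 1 ≤ dBowen T θ ε n ω x z := by
    intro z hz
    by_contra! hlt
    obtain ⟨k, hk⟩ := hcon z hz
    exact hk.not_gt (dist_lt_of_dBowen_lt_one hε hlt k)
  have hsymm : ∀ y z, dBowen T θ ε n ω y z = dBowen T θ ε n ω z y := fun y z => by
    simp only [dBowen, dist_comm]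
  have hxF : x ∉ F := fun hxF => by
    refine (hfar x hxF).not_gt (dBowen_lt_one hε fun k => ?_)
    simpa using hε
  have hle : (insert x F).card ≤ F.card := by
    rw [hFc]
    refine le_csSup hbdd ⟨insert x F, ?_, rfl, ?_⟩
    · simpa [insert_subset_iff] using ⟨hx, hFE⟩
    · intro y hy z hz hyz
      rcases Finset.mem_insert.1 hy with rfl | hy' <;> rcases Finset.mem_insert.1 hz with rfl | hz'
      · exact absurd rfl hyz
      · exact hfar z hz'
      · exact hsymm y z ▸ hfar y hy'
      · exact hF y hy' z hz' hyz
  rw [Finset.card_insert_of_notMem hxF] at hle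
  omega

theorem eventually_sepN_le_exp {ω : Ω} {ε h : ℝ} (hε : 0 < ε) (hS : Ssep T θ E ω ε < h) :
    ∀ᶠ n : ℕ in atTop, (sepN T θ E ε n ω : ℝ) ≤ Real.exp (h * n) := by
  obtain ⟨N, hN0, hN⟩ := exists_card_le_pow_of_separated T θ hε
  have hb : IsBoundedUnder (· ≤ ·) atTop
      (fun n : ℕ => Real.log (sepN T θ E ε n ω) / n) := by
    refine isBoundedUnder_of ⟨Real.log N, fun n => ?_⟩
    have hNn : sepN T θ E ε n ω ≤ N ^ n := by
      refine csSup_le' ?_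
      rintro _ ⟨F, -, rfl, hF⟩
      exact hN n ω F hF
    have hlog : 0 ≤ Real.log N := Real.log_natCast_nonneg N
    refine div_le_of_le_mul₀ n.cast_nonneg hlog ?_
    rcases Nat.eq_zero_or_pos (sepN T θ E ε n ω) with h0 | h0
    · rw [h0]; simp; positivity
    · calc Real.log (sepN T θ E ε n ω) ≤ Real.log ((N : ℝ) ^ n) :=
            Real.log_le_log (by exact_mod_cast h0) (by exact_mod_cast hNn)
        _ = Real.log N * n := by rw [Real.log_pow, mul_comm]
  filter_upwards [eventually_lt_of_limsup_lt hS hb, eventually_gt_atTop 0] with n hn hn0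
  rw [div_lt_iff₀ (by exact_mod_cast hn0)] at hn
  rcases Nat.eq_zero_or_pos (sepN T θ E ε n ω) with h0 | h0
  · rw [h0]; simp; positivity
  · exact ((Real.log_lt_iff_lt_exp (by exact_mod_cast h0)).1 hn).le

theorem eventually_DOn_dynCover_le {ι : Type*} [Fintype ι] {U : ι → Set X}
    (hU : IsOpenCover U) {ω : Ω} (hne : (fiber E ω).Nonempty)
    (hm : ∀ k, MapsTo (T (θ^[k] ω)) (fiber E (θ^[k] ω)) (fiber E (θ (θ^[k] ω))))
    (hc : ∀ k, ContinuousOn (T (θ^[k] ω)) (fiber E (θ^[k] ω))) {h : ℝ}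
    (hS : ∀ ε ∈ Ioo (0 : ℝ) 1, Ssep T θ E ω ε < h) {δ : ℝ} (hδ : 0 < δ) :
    ∀ᶠ n : ℕ in atTop, (DOn (fiber E ω) (dynCover T θ E U n ω) : ℝ) ≤ δ * n := by
  obtain ⟨f, hf, hfU, hf1⟩ := exists_continuous_subordinate hU
  set B : ℝ := Real.exp h * 2 ^ Fintype.card ι with hB
  have hB0 : 0 < B := by positivity
  obtain ⟨q, hq1, hq⟩ : ∃ q : ℕ, 0 < q ∧ B < (q : ℝ) ^ δ := by
    have := ((tendsto_rpow_atTop hδ).comp tendsto_natCast_atTop_atTop).eventually_gt_atTop B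
    obtain ⟨q, hq, hq'⟩ := (this.and (eventually_gt_atTop 0)).exists
    exact ⟨q, hq', hq⟩
  have hq0 : (0 : ℝ) < q := by exact_mod_cast hq1
  let ξ₀ : Fin q → ℝ := fun a => ((a : ℝ) + 1) / (q + 1)
  have hξ₀ : ∀ a, ξ₀ a ∈ Ioo (0 : ℝ) 1 := fun a => by
    have : (a : ℝ) < q := by exact_mod_cast a.2
    exact ⟨by positivity, by rw [div_lt_one (by positivity)]; linarith⟩
  have hsep : ∀ a b, |ξ₀ a - ξ₀ b| < 1 / (q + 1) → a = b := by
    intro a b hab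
    rw [← sub_div, abs_div, abs_of_pos (by positivity : (0 : ℝ) < q + 1)] at hab
    have h1 := (div_lt_div_iff_of_pos_right (by positivity)).1 hab
    have h2 : |((a : ℕ) : ℤ) - (b : ℕ)| < 1 := by
      have : (a : ℝ) + 1 - (b + 1) = (a : ℝ) - b := by ring
      rw [this] at h1
      exact_mod_cast h1
    rw [Int.abs_lt_one_iff] at h2
    exact Fin.ext (by omega)
  obtain ⟨ε₁, hε₁, hfε⟩ := Metric.uniformContinuous_iff.1
    (CompactSpace.uniformContinuous_of_continuous hf) (1 / (2 * (q + 1))) (by positivity)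
  set ε : ℝ := min ε₁ (1 / 2)
  have hε : ε ∈ Ioo (0 : ℝ) 1 := ⟨by positivity, (min_le_right _ _).trans_lt (by norm_num)⟩
  filter_upwards [eventually_sepN_le_exp hε.1 (hS ε hε), eventually_gt_atTop 0] with n hn hn0
  have hn0' : (0 : ℝ) < n := by exact_mod_cast hn0
  obtain ⟨F, hFc, hF⟩ := exists_finset_card_eq_sepN T θ E hε.1 n ω
  set d := ⌊δ * n⌋₊
  have hcount : F.card * 2 ^ Fintype.card (Fin n × ι) < q ^ (d + 1) := by
    have : (F.card : ℝ) * 2 ^ Fintype.card (Fin n × ι) < q ^ (d + 1) := by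
      calc (F.card : ℝ) * 2 ^ Fintype.card (Fin n × ι)
          ≤ Real.exp (h * n) * 2 ^ Fintype.card (Fin n × ι) := by rw [hFc]; gcongr
        _ = B ^ n := by
            rw [hB, mul_pow, ← Real.exp_nat_mul, ← pow_mul]
            simp [mul_comm]
        _ < ((q : ℝ) ^ δ) ^ n := by gcongr
        _ = (q : ℝ) ^ (δ * n) := by rw [Real.rpow_mul hq0.le, Real.rpow_natCast]
        _ ≤ (q : ℝ) ^ ((d + 1 : ℕ) : ℝ) := by
            refine Real.rpow_le_rpow_of_exponent_le (by exact_mod_cast hq1) ?_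
            push_cast
            exact (Nat.lt_floor_add_one _).le
        _ = q ^ (d + 1) := Real.rpow_natCast _ _
    exact_mod_cast this
  obtain ⟨ξ, hξ⟩ := exists_card_coincidence_le hq1 F
    (fun z (i : Fin n × ι) a => |f (itr T θ i.1 ω z) i.2 - ξ₀ a| < 1 / (2 * (q + 1)))
    (fun z i a b ha hb => hsep a b (by
      have h1 := abs_sub_le (ξ₀ a) (f (itr T θ i.1 ω z) i.2) (ξ₀ b)
      rw [abs_sub_comm (ξ₀ a) (f _ _)] at h1
      have h2 : (1 : ℝ) / (q + 1) = 1 / (2 * (q + 1)) + 1 / (2 * (q + 1)) := by field_simp; norm_num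
      linarith)) hcount
  have hD : DOn (fiber E ω) (dynCover T θ E U n ω) ≤ d := by
    refine DOn_dynCover_le hf hfU hf1 hne hm hc (ξ := fun i => ξ₀ (ξ i)) (fun i => hξ₀ _)
      fun x hx => ?_
    obtain ⟨z, hz, hxz⟩ := hF x hx
    refine le_trans (Nat.card_le_card_of_injective (Subtype.map id fun i hi => ?_)
      (Subtype.map_injective _ Function.injective_id)) (hξ z hz)
    have h1 := hfε ((hxz i.1).trans_le (min_le_left _ _))
    have h2 := (dist_pi_lt_iff (by positivity)).1 h1 i.2
    rw [hi, dist_comm, Real.dist_eq] at h2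
    exact h2
  calc (DOn (fiber E ω) (dynCover T θ E U n ω) : ℝ) ≤ d := by exact_mod_cast hD
    _ ≤ δ * n := Nat.floor_le (by positivity)

end Separated

theorem DOn_dynCover_le_mul_card [PseudoMetricSpace X] [CompactSpace X] {ι : Type*} [Fintype ι]
    {U : ι → Set X} (hU : IsOpenCover U) {ω : Ω} (hne : (fiber E ω).Nonempty)
    (hm : ∀ k, MapsTo (T (θ^[k] ω)) (fiber E (θ^[k] ω)) (fiber E (θ (θ^[k] ω))))
    (hc : ∀ k, ContinuousOn (T (θ^[k] ω)) (fiber E (θ^[k] ω))) (n : ℕ) :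
    DOn (fiber E ω) (dynCover T θ E U n ω) ≤ n * Fintype.card ι := by
  obtain ⟨f, hf, hfU, hf1⟩ := exists_continuous_subordinate hU
  refine DOn_dynCover_le hf hfU hf1 hne hm hc (ξ := fun _ => 1 / 2) (fun _ => by norm_num)
    fun x _ => ?_
  simpa using Nat.card_le_card_of_injective _
    (Subtype.val_injective (p := fun i : Fin n × ι => f (itr T θ i.1 ω x) i.2 = 1 / 2))

end Dynamics

/-- A reverse Fatou argument for lower integrals: no measurability of `D` or `H` is needed. -/
theorem tendsto_lintegral_div_of_ne_top {Ω : Type*} [MeasurableSpace Ω] {P : Measure Ω}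
    [IsFiniteMeasure P] {D : ℕ → Ω → ℝ≥0∞} {H : Ω → ℝ≥0∞} {C : ℝ≥0∞} (hC : C ≠ ⊤)
    (hH : ∫⁻ ω, H ω ∂P ≠ ⊤) (hDC : ∀ᵐ ω ∂P, ∀ n, D n ω / n ≤ C)
    (hD : ∀ᵐ ω ∂P, H ω ≠ ⊤ → Tendsto (fun n => D n ω / n) atTop (𝓝 0)) :
    Tendsto (fun n : ℕ => (∫⁻ ω, D n ω ∂P) / n) atTop (𝓝 0) := by
  choose g hgm hgD hgint using fun n => exists_measurable_le_lintegral_eq (μ := P) (D n)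
  let G : Ω → ℝ≥0∞ := fun ω => limsup (fun n : ℕ => g n ω / n) atTop
  have hGm : Measurable G := .limsup fun n => (hgm n).div_const _
  have hG0 : ∫⁻ ω, G ω ∂P = 0 := by
    have hs : MeasurableSet {ω | G ω ≠ 0} := (hGm (measurableSet_singleton 0)).compl
    have hle : ∫⁻ ω, ({ω | G ω ≠ 0}.indicator fun _ => ⊤) ω ∂P ≤ ∫⁻ ω, H ω ∂P := by
      refine lintegral_mono_ae ?_
      filter_upwards [hD] with ω hω
      refine indicator_apply_le fun hGω => ?_
      by_contra hHω
      refine hGω (le_antisymm ?_ zero_le)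
      exact (limsup_le_limsup (Eventually.of_forall fun n =>
        ENNReal.div_le_div_right (hgD n ω) _)).trans
        (hω fun h => hHω h.ge).limsup_eq.le
    rw [lintegral_indicator_const hs] at hle
    rw [lintegral_eq_zero_iff hGm]
    by_contra hP
    exact hH (top_le_iff.1 ((ENNReal.top_mul hP).ge.trans hle))
  have hlim : limsup (fun n : ℕ => ∫⁻ ω, g n ω / n ∂P) atTop ≤ 0 := by
    refine (limsup_lintegral_le (fun _ => C) (fun n => (hgm n).div_const _) (fun n => ?_)
      (by simpa using ENNReal.mul_ne_top hC (measure_ne_top P _))).trans hG0.le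
    filter_upwards [hDC] with ω hω
    exact (ENNReal.div_le_div_right (hgD n ω) _).trans (hω n)
  have heq : (fun n : ℕ => (∫⁻ ω, D n ω ∂P) / n) = fun n : ℕ => ∫⁻ ω, g n ω / n ∂P := by
    funext n
    simp_rw [hgint, div_eq_mul_inv]
    rw [lintegral_mul_const _ (hgm n)]
  rw [heq]
  exact tendsto_of_le_liminf_of_limsup_le zero_le hlim

theorem stmt13
    {Ω X : Type*} [MeasurableSpace Ω]
    (P : MeasureTheory.Measure Ω) [MeasureTheory.IsProbabilityMeasure P] [P.IsComplete]
    [MetricSpace X] [CompactSpace X] [MeasurableSpace X] [BorelSpace X]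
    (θ : Ω → Ω) (hθ : MeasureTheory.MeasurePreserving θ P P)
    (E : Set (Ω × X)) (hE : MeasurableSet E)
    (hEne : ∀ ω, (fiber E ω).Nonempty) (hEcp : ∀ ω, IsCompact (fiber E ω))
    (T : Ω → X → X) (hTm : Measurable fun p : Ω × X => T p.1 p.2)
    (hTmap : ∀ᵐ ω ∂P, Set.MapsTo (T ω) (fiber E ω) (fiber E (θ ω)))
    (hTc : ∀ᵐ ω ∂P, ContinuousOn (T ω) (fiber E ω))
    (hfin : htop T θ E P ≠ ⊤) :
    mdim P T θ E = 0 := by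
  have hgood : ∀ᵐ ω ∂P, ∀ k : ℕ,
      MapsTo (T (θ^[k] ω)) (fiber E (θ^[k] ω)) (fiber E (θ (θ^[k] ω))) ∧
      ContinuousOn (T (θ^[k] ω)) (fiber E (θ^[k] ω)) :=
    ae_all_iff.2 fun k => (hθ.iterate k).quasiMeasurePreserving.ae (hTmap.and hTc)
  simp only [mdim, ENNReal.iSup_eq_zero]
  intro m U hU
  refine (tendsto_lintegral_div_of_ne_top (C := m) (ENNReal.natCast_ne_top m) hfin ?_ ?_).liminf_eq
  · filter_upwards [hgood] with ω hω n
    refine ENNReal.div_le_of_le_mul ?_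
    have := DOn_dynCover_le_mul_card hU (hEne ω) (fun k => (hω k).1) (fun k => (hω k).2) n
    rw [Fintype.card_fin, mul_comm] at this
    exact_mod_cast this
  · filter_upwards [hgood] with ω hω hH
    have hS : ∀ ε ∈ Ioo (0 : ℝ) 1, Ssep T θ E ω ε <
        (⨆ ε : Ioo (0 : ℝ) 1, ENNReal.ofReal (Ssep T θ E ω (ε : ℝ))).toReal + 1 := by
      intro ε hε
      refine lt_add_of_le_of_pos ((ENNReal.ofReal_le_iff_le_toReal hH).1 ?_) one_pos
      exact le_iSup (fun ε : Ioo (0 : ℝ) 1 => ENNReal.ofReal (Ssep T θ E ω (ε : ℝ))) ⟨ε, hε⟩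
    refine ENNReal.tendsto_nhds_zero.2 fun δ hδ => ?_
    rcases eq_or_ne δ ⊤ with rfl | hδt
    · simp
    filter_upwards [eventually_DOn_dynCover_le hU (hEne ω) (fun k => (hω k).1)
      (fun k => (hω k).2) hS (ENNReal.toReal_pos hδ.ne' hδt)] with n hn
    refine ENNReal.div_le_of_le_mul ?_
    have := ENNReal.ofReal_le_ofReal hn
    rwa [ENNReal.ofReal_natCast, ENNReal.ofReal_mul ENNReal.toReal_nonneg,
      ENNReal.ofReal_toReal hδt, ENNReal.ofReal_natCast] at this
end

section
/- Under the Setup, let E′ ⊆ X be a closed set. Then ∫_Ω ocap^ω(E′) dP(ω) = sup{ μ(Ω×E′) : μ ∈ I_P(E) }. -/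
open MeasureTheory Set Filter Topology
open scoped ENNReal

section Daniell

variable {Z : Type*}

/-- The region of `Z × ℝ` between the graphs of `f` and `g`. -/
def graphRegion (f g : Z → ℝ) : Set (Z × ℝ) := {p | f p.1 ≤ p.2 ∧ p.2 < g p.1}

/-- The regions between the graphs of two functions in `L`. -/
def graphRegions (L : Submodule ℝ (Z → ℝ)) : Set (Set (Z × ℝ)) :=
  {S | ∃ f ∈ L, ∃ g ∈ L, S = graphRegion f g}

/-- The length of the vertical section of `S` over `z`. -/
noncomputable def sectionLength (S : Set (Z × ℝ)) (z : Z) : ℝ :=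
  (volume (Prod.mk z ⁻¹' S)).toReal

lemma preimage_graphRegion (f g : Z → ℝ) (z : Z) :
    Prod.mk z ⁻¹' graphRegion f g = Ico (f z) (g z) := rfl

lemma sectionLength_graphRegion (f g : Z → ℝ) :
    sectionLength (graphRegion f g) = (g - f) ⊔ 0 := by
  ext z
  simp [sectionLength, preimage_graphRegion, Real.volume_Ico, ENNReal.toReal_ofReal']

variable {L : Submodule ℝ (Z → ℝ)}

lemma inf_mem_of_sup_mem (hsup : ∀ f ∈ L, ∀ g ∈ L, f ⊔ g ∈ L) {f g : Z → ℝ} (hf : f ∈ L)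
    (hg : g ∈ L) : f ⊓ g ∈ L := by
  have := L.neg_mem (hsup _ (L.neg_mem hf) _ (L.neg_mem hg))
  rwa [← neg_inf, neg_neg] at this

lemma isSetSemiring_graphRegions (hsup : ∀ f ∈ L, ∀ g ∈ L, f ⊔ g ∈ L) :
    IsSetSemiring (graphRegions L) where
  empty_mem := ⟨0, L.zero_mem, 0, L.zero_mem, by
    ext p; simp [graphRegion]⟩
  inter_mem := by
    rintro _ ⟨f, hf, g, hg, rfl⟩ _ ⟨f', hf', g', hg', rfl⟩
    refine ⟨f ⊔ f', hsup _ hf _ hf', g ⊓ g', inf_mem_of_sup_mem hsup hg hg', ?_⟩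
    ext p
    simp only [graphRegion, mem_inter_iff, mem_ofPred_eq, Pi.sup_apply, Pi.inf_apply, sup_le_iff,
      lt_inf_iff]
    tauto
  sdiff_eq_sUnion' := by
    classical
    rintro _ ⟨f, hf, g, hg, rfl⟩ _ ⟨f', hf', g', hg', rfl⟩
    refine ⟨{graphRegion f (g ⊓ f'), graphRegion (f ⊔ (g' ⊔ f')) g}, ?_, ?_, ?_⟩
    · intro S hS
      simp only [Finset.coe_insert, Finset.coe_singleton, mem_insert_iff, mem_singleton_iff] at hS
      rcases hS with rfl | rfl
      · exact ⟨f, hf, _, inf_mem_of_sup_mem hsup hg hf', rfl⟩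
      · exact ⟨_, hsup _ hf _ (hsup _ hg' _ hf'), g, hg, rfl⟩
    · rw [Finset.coe_insert, Finset.coe_singleton]
      refine (pairwiseDisjoint_singleton _ _).insert ?_
      rintro S rfl -
      refine Set.disjoint_left.2 fun p hp hp' => ?_
      simp only [id, graphRegion, mem_ofPred_eq, Pi.sup_apply, Pi.inf_apply, sup_le_iff,
        lt_inf_iff] at hp hp'
      linarith
    · ext p
      simp only [graphRegion, Set.mem_sdiff, mem_ofPred_eq, Finset.coe_insert, Finset.coe_singleton,
        sUnion_insert, sUnion_singleton, mem_union, Pi.sup_apply, Pi.inf_apply, sup_le_iff,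
        lt_inf_iff]
      grind

lemma sectionLength_mem (hsup : ∀ f ∈ L, ∀ g ∈ L, f ⊔ g ∈ L) {S : Set (Z × ℝ)}
    (hS : S ∈ graphRegions L) : sectionLength S ∈ L := by
  obtain ⟨f, hf, g, hg, rfl⟩ := hS
  rw [sectionLength_graphRegion]
  exact hsup _ (L.sub_mem hg hf) _ L.zero_mem

lemma measurableSet_preimage_of_mem_graphRegions {S : Set (Z × ℝ)} (hS : S ∈ graphRegions L)
    (z : Z) : MeasurableSet (Prod.mk z ⁻¹' S) := by
  obtain ⟨f, -, g, -, rfl⟩ := hS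
  rw [preimage_graphRegion]
  exact measurableSet_Ico

lemma volume_preimage_ne_top {S : Set (Z × ℝ)} (hS : S ∈ graphRegions L) (z : Z) :
    volume (Prod.mk z ⁻¹' S) ≠ ∞ := by
  obtain ⟨f, -, g, -, rfl⟩ := hS
  simp [preimage_graphRegion]

/-- The additive content on regions between graphs induced by a positive linear functional. -/
noncomputable def graphContent (hsup : ∀ f ∈ L, ∀ g ∈ L, f ⊔ g ∈ L) (ℓ : (Z → ℝ) →ₗ[ℝ] ℝ)
    (hpos : ∀ f ∈ L, 0 ≤ f → 0 ≤ ℓ f) : AddContent ℝ≥0∞ (graphRegions L) where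
  toFun S := ENNReal.ofReal (ℓ (sectionLength S))
  empty' := by
    have : sectionLength (∅ : Set (Z × ℝ)) = 0 := by ext z; simp [sectionLength]
    simp [this]
  sUnion' I hI hd hU := by
    have : sectionLength (⋃₀ (I : Set (Set (Z × ℝ)))) = ∑ S ∈ I, sectionLength S := by
      ext z
      rw [Finset.sum_apply]
      simp only [sectionLength]
      rw [← ENNReal.toReal_sum fun S hS => volume_preimage_ne_top (hI hS) z,
        sUnion_eq_biUnion, preimage_iUnion₂]
      congr 1
      refine measure_biUnion_finset (fun S hS S' hS' h => ?_) fun S hS =>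
        measurableSet_preimage_of_mem_graphRegions (hI hS) z
      exact Disjoint.preimage _ (hd hS hS' h)
    rw [this, map_sum, ENNReal.ofReal_sum_of_nonneg]
    exact fun S hS => hpos _ (sectionLength_mem hsup (hI hS)) fun z => ENNReal.toReal_nonneg

lemma graphContent_apply (hsup : ∀ f ∈ L, ∀ g ∈ L, f ⊔ g ∈ L) (ℓ : (Z → ℝ) →ₗ[ℝ] ℝ)
    (hpos : ∀ f ∈ L, 0 ≤ f → 0 ≤ ℓ f) (f g : Z → ℝ) :
    graphContent hsup ℓ hpos (graphRegion f g) = ENNReal.ofReal (ℓ ((g - f) ⊔ 0)) := by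
  rw [← sectionLength_graphRegion]; rfl

lemma isSigmaSubadditive_graphContent (hsup : ∀ f ∈ L, ∀ g ∈ L, f ⊔ g ∈ L) (ℓ : (Z → ℝ) →ₗ[ℝ] ℝ)
    (hpos : ∀ f ∈ L, 0 ≤ f → 0 ≤ ℓ f)
    (hD : ∀ f : ℕ → Z → ℝ, (∀ n, f n ∈ L) → Antitone f →
      (∀ z, Tendsto (fun n => f n z) atTop (𝓝 0)) → Tendsto (fun n => ℓ (f n)) atTop (𝓝 0)) :
    (graphContent hsup ℓ hpos).IsSigmaSubadditive := by
  intro S hS hU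
  change ENNReal.ofReal (ℓ (sectionLength _)) ≤ ∑' n, ENNReal.ofReal (ℓ (sectionLength (S n)))
  have hmem := sectionLength_mem hsup hU
  have hn n := sectionLength_mem hsup (hS n)
  have hnn : ∀ n, 0 ≤ sectionLength (S n) := fun n z => ENNReal.toReal_nonneg
  set u := sectionLength (⋃ i, S i)
  set v := fun n => sectionLength (S n)
  let h : ℕ → Z → ℝ := fun N => (u - ∑ n ∈ Finset.range N, v n) ⊔ 0
  have hsumL N : ∑ n ∈ Finset.range N, v n ∈ L := L.sum_mem fun n _ => hn n
  have hhL N : h N ∈ L := hsup _ (L.sub_mem hmem (hsumL N)) _ L.zero_mem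
  have hanti : Antitone h := by
    refine antitone_nat_of_succ_le fun N => ?_
    intro z
    simp only [h, Pi.sup_apply, Pi.sub_apply, Finset.sum_apply, Finset.sum_range_succ, Pi.add_apply]
    have := hnn N z
    simp only [Pi.zero_apply] at this
    gcongr
    linarith
  have htend : ∀ z, Tendsto (fun n => h n z) atTop (𝓝 0) := by
    intro z
    rw [Metric.tendsto_atTop]
    intro ε hε
    have hle : volume (Prod.mk z ⁻¹' ⋃ i, S i) ≤ ∑' n, volume (Prod.mk z ⁻¹' S n) := by
      rw [preimage_iUnion]; exact measure_iUnion_le _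
    have hlt : ENNReal.ofReal (u z - ε) < ∑' n, volume (Prod.mk z ⁻¹' S n) ∨ u z - ε < 0 := by
      rcases lt_or_ge (u z - ε) 0 with h0 | h0
      · exact Or.inr h0
      · refine Or.inl (lt_of_lt_of_le ?_ hle)
        rw [← ENNReal.ofReal_toReal (volume_preimage_ne_top hU z)]
        exact (ENNReal.ofReal_lt_ofReal_iff (by change 0 < u z; linarith)).2
          (by change u z - ε < u z; linarith)
    have hex : ∃ N, u z - ε < ∑ n ∈ Finset.range N, v n z := by
      rcases hlt with h1 | h1
      · rw [ENNReal.tsum_eq_iSup_nat] at h1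
        obtain ⟨N, hN⟩ := lt_iSup_iff.1 h1
        refine ⟨N, ?_⟩
        have : ∑ n ∈ Finset.range N, volume (Prod.mk z ⁻¹' S n)
            = ENNReal.ofReal (∑ n ∈ Finset.range N, v n z) := by
          rw [ENNReal.ofReal_sum_of_nonneg fun n _ => hnn n z]
          exact Finset.sum_congr rfl fun n _ =>
            (ENNReal.ofReal_toReal (volume_preimage_ne_top (hS n) z)).symm
        rw [this] at hN
        exact (ENNReal.ofReal_lt_ofReal_iff'.1 hN).1
      · exact ⟨0, by simpa using h1⟩
    obtain ⟨N, hN⟩ := hex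
    refine ⟨N, fun n hNn => ?_⟩
    have h0 : 0 ≤ h n z := le_sup_right
    have h1 : h n z ≤ h N z := hanti hNn z
    rw [Real.dist_eq, sub_zero, abs_of_nonneg h0]
    refine h1.trans_lt ?_
    simp only [h, Pi.sup_apply, Pi.sub_apply, Finset.sum_apply, Pi.zero_apply, sup_lt_iff]
    exact ⟨by linarith, hε⟩
  have key N : ℓ u ≤ ℓ (h N) + ∑ n ∈ Finset.range N, ℓ (v n) := by
    have h1 : 0 ≤ ℓ (h N - (u - ∑ n ∈ Finset.range N, v n)) :=
      hpos _ (L.sub_mem (hhL N) (L.sub_mem hmem (hsumL N))) (sub_nonneg.2 le_sup_left)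
    rw [map_sub, map_sub, map_sum] at h1
    linarith
  have key2 N : ENNReal.ofReal (ℓ u) ≤
      ENNReal.ofReal (ℓ (h N)) + ∑' n, ENNReal.ofReal (ℓ (v n)) := by
    refine (ENNReal.ofReal_le_ofReal (key N)).trans (ENNReal.ofReal_add_le.trans ?_)
    gcongr
    rw [ENNReal.ofReal_sum_of_nonneg fun n _ => hpos _ (hn n) (hnn n)]
    exact ENNReal.sum_le_tsum _
  have hlim : Tendsto (fun N => ENNReal.ofReal (ℓ (h N)) + ∑' n, ENNReal.ofReal (ℓ (v n))) atTop
      (𝓝 (∑' n, ENNReal.ofReal (ℓ (v n)))) := by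
    simpa using (ENNReal.tendsto_ofReal (hD h hhL hanti htend)).add_const
      (∑' n, ENNReal.ofReal (ℓ (v n)))
  exact ge_of_tendsto' hlim key2

variable [mZ : MeasurableSpace Z]

lemma measurableSpace_prod_eq_generateFrom_graphRegions
    (h1 : (1 : Z → ℝ) ∈ L) (hmeas : ∀ f ∈ L, Measurable f)
    (hgen : mZ ≤ MeasurableSpace.generateFrom {S | ∃ f ∈ L, 0 ≤ f ∧ S = {z | 0 < f z}}) :
    (inferInstance : MeasurableSpace (Z × ℝ)) =
      MeasurableSpace.generateFrom (graphRegions L) := by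
  have hmem {f g : Z → ℝ} (hf : f ∈ L) (hg : g ∈ L) :
      MeasurableSet[MeasurableSpace.generateFrom (graphRegions L)] (graphRegion f g) :=
    MeasurableSpace.measurableSet_generateFrom ⟨f, hf, g, hg, rfl⟩
  have hc (c : ℝ) : (fun _ => c : Z → ℝ) ∈ L := by
    have := L.smul_mem c h1
    convert this using 1
    ext; simp
  apply le_antisymm
  · refine sup_le ?_ ?_
    · rw [MeasurableSpace.comap_le_iff_le_map]
      refine hgen.trans (MeasurableSpace.generateFrom_le ?_)
      rintro _ ⟨f, hf, hf0, rfl⟩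
      have : (Prod.fst ⁻¹' {z | 0 < f z} : Set (Z × ℝ))
          = ⋃ n : ℕ, graphRegion ((-(n : ℝ)) • f) ((n : ℝ) • f) := by
        ext ⟨z, t⟩
        simp only [mem_preimage, mem_ofPred_eq, mem_iUnion, graphRegion, Pi.smul_apply, smul_eq_mul]
        constructor
        · intro h
          obtain ⟨n, hn⟩ := exists_nat_gt (|t| / f z)
          rw [div_lt_iff₀ h] at hn
          exact ⟨n, by linarith [neg_abs_le t], by linarith [le_abs_self t]⟩
        · rintro ⟨n, h2, h3⟩
          by_contra h4
          have : f z = 0 := le_antisymm (not_lt.1 h4) (hf0 z)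
          rw [this] at h2 h3
          linarith
      change MeasurableSet[MeasurableSpace.generateFrom (graphRegions L)] (Prod.fst ⁻¹' {z | 0 < f z})
      rw [this]
      exact MeasurableSet.iUnion fun n => hmem (L.smul_mem _ hf) (L.smul_mem _ hf)
    · rw [MeasurableSpace.comap_le_iff_le_map, BorelSpace.measurable_eq (α := ℝ),
        borel_eq_generateFrom_Ici ℝ]
      refine MeasurableSpace.generateFrom_le ?_
      rintro _ ⟨a, rfl⟩
      have : (Prod.snd ⁻¹' Ici a : Set (Z × ℝ))
          = ⋃ n : ℕ, graphRegion (fun _ => a) (fun _ => a + n) := by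
        ext ⟨z, t⟩
        simp only [mem_preimage, mem_Ici, mem_iUnion, graphRegion, mem_ofPred_eq]
        constructor
        · intro h
          obtain ⟨n, hn⟩ := exists_nat_gt (t - a)
          exact ⟨n, h, by linarith⟩
        · rintro ⟨n, h, -⟩; exact h
      change MeasurableSet[MeasurableSpace.generateFrom (graphRegions L)] (Prod.snd ⁻¹' Ici a)
      rw [this]
      exact MeasurableSet.iUnion fun n => hmem (hc _) (hc _)
  · refine MeasurableSpace.generateFrom_le ?_
    rintro _ ⟨f, hf, g, hg, rfl⟩
    exact (measurableSet_le ((hmeas f hf).comp measurable_fst) measurable_snd).inter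
      (measurableSet_lt measurable_snd ((hmeas g hg).comp measurable_fst))

lemma sum_range_clamp (y : ℝ) (K : ℕ) :
    ∑ k ∈ Finset.range K, ((y - k) ⊓ 1) ⊔ 0 = (y ⊓ K) ⊔ 0 := by
  induction K with
  | zero => simp
  | succ K ih =>
    rw [Finset.sum_range_succ, ih]
    push_cast
    have : (0 : ℝ) ≤ K := Nat.cast_nonneg K
    grind

/-- **Daniell–Stone theorem** for bounded functions. -/
theorem exists_measure_of_daniell (hsup : ∀ f ∈ L, ∀ g ∈ L, f ⊔ g ∈ L)
    (h1 : (1 : Z → ℝ) ∈ L) (hmeas : ∀ f ∈ L, Measurable f) (hbdd : ∀ f ∈ L, ∃ C, ∀ z, f z ≤ C)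
    (hgen : mZ ≤ MeasurableSpace.generateFrom {S | ∃ f ∈ L, 0 ≤ f ∧ S = {z | 0 < f z}})
    (ℓ : (Z → ℝ) →ₗ[ℝ] ℝ) (hpos : ∀ f ∈ L, 0 ≤ f → 0 ≤ ℓ f)
    (hD : ∀ f : ℕ → Z → ℝ, (∀ n, f n ∈ L) → Antitone f →
      (∀ z, Tendsto (fun n => f n z) atTop (𝓝 0)) → Tendsto (fun n => ℓ (f n)) atTop (𝓝 0)) :
    ∃ μ : Measure Z, IsFiniteMeasure μ ∧ ∀ f ∈ L, 0 ≤ f → ∫ z, f z ∂μ = ℓ f := by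
  set hC := isSetSemiring_graphRegions hsup
  have hprod := measurableSpace_prod_eq_generateFrom_graphRegions h1 hmeas hgen
  set m := graphContent hsup ℓ hpos with hm
  have hsub := isSigmaSubadditive_graphContent hsup ℓ hpos hD
  set ν := m.measure hC hprod.le hsub with hν
  have hνap {f : Z → ℝ} (hf : f ∈ L) (hf0 : 0 ≤ f) :
      ν (graphRegion 0 f) = ENNReal.ofReal (ℓ f) := by
    rw [hν, m.measure_eq hC hprod hsub ⟨0, L.zero_mem, f, hf, rfl⟩, hm, graphContent_apply,
      sub_zero, sup_of_le_left hf0]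
  let μ : Measure Z := (ν.restrict (Prod.snd ⁻¹' Ico 0 1)).map Prod.fst
  have hμap {D : Set Z} (hDm : MeasurableSet D) : μ D = ν (D ×ˢ Ico 0 1) := by
    rw [Measure.map_apply measurable_fst hDm, Measure.restrict_apply (measurable_fst hDm)]
    rfl
  have hμuniv : μ univ = ENNReal.ofReal (ℓ 1) := by
    rw [hμap MeasurableSet.univ, ← hνap h1 zero_le_one]
    congr 1
    ext p; simp [graphRegion]
  have hfin : IsFiniteMeasure μ := ⟨by rw [hμuniv]; exact ENNReal.ofReal_lt_top⟩
  have hupper {f : Z → ℝ} (hf : f ∈ L) (hf0 : 0 ≤ f) {D : Set Z} (hDm : MeasurableSet D)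
      (h : D.indicator 1 ≤ f) : μ.real D ≤ ℓ f := by
    refine ENNReal.toReal_le_of_le_ofReal (hpos f hf hf0) ?_
    rw [hμap hDm, ← hνap hf hf0]
    refine measure_mono ?_
    rintro ⟨z, t⟩ ⟨hz, ht⟩
    refine ⟨ht.1, ht.2.trans_le ?_⟩
    simpa [indicator_of_mem (show z ∈ D from hz)] using h z
  have hlower {f : Z → ℝ} (hf : f ∈ L) (hf0 : 0 ≤ f) {D : Set Z} (hDm : MeasurableSet D)
      (h : f ≤ D.indicator 1) : ℓ f ≤ μ.real D := by
    rw [measureReal_def, ← ENNReal.ofReal_le_iff_le_toReal (measure_ne_top _ _), hμap hDm,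
      ← hνap hf hf0]
    refine measure_mono ?_
    rintro ⟨z, t⟩ ⟨ht0, ht1⟩
    have h' := h z
    by_cases hz : z ∈ D
    · rw [indicator_of_mem hz] at h'
      exact ⟨hz, ht0, ht1.trans_le h'⟩
    · rw [indicator_of_notMem hz] at h'
      exact absurd (ht0.trans_lt (ht1.trans_le h')) (lt_irrefl _)
  have hint {f : Z → ℝ} (hf : f ∈ L) (hf0 : 0 ≤ f) : Integrable f μ := by
    obtain ⟨C, hC⟩ := hbdd f hf
    refine Integrable.of_bound (hmeas f hf).aestronglyMeasurable C (ae_of_all _ fun z => ?_)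
    rw [Real.norm_eq_abs, abs_of_nonneg (hf0 z)]
    exact hC z
  have hclose {f : Z → ℝ} (hf : f ∈ L) (hf0 : 0 ≤ f) :
      |∫ z, f z ∂μ - ℓ f| ≤ μ.real univ := by
    obtain ⟨C, hC⟩ := hbdd f hf
    obtain ⟨K, hK⟩ := exists_nat_ge C
    let D : ℕ → Set Z := fun k => {z | (k : ℝ) ≤ f z}
    have hDm k : MeasurableSet (D k) := measurableSet_le measurable_const (hmeas f hf)
    let c : ℕ → Z → ℝ := fun k => ((f - (k : ℝ) • 1) ⊓ 1) ⊔ 0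
    have hcL k : c k ∈ L := hsup _ (inf_mem_of_sup_mem hsup
      (L.sub_mem hf (L.smul_mem _ h1)) h1) _ L.zero_mem
    have hc0 k : 0 ≤ c k := le_sup_right
    have hsum : f = ∑ k ∈ Finset.range K, c k := by
      ext z
      rw [Finset.sum_apply]
      have := sum_range_clamp (f z) K
      simp only [c, Pi.sup_apply, Pi.inf_apply, Pi.sub_apply, Pi.smul_apply, Pi.one_apply,
        smul_eq_mul, mul_one, Pi.zero_apply]
      rw [this, inf_of_le_left ((hC z).trans hK)]
      exact (sup_of_le_left (hf0 z)).symm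
    have hcl k : (D (k + 1)).indicator 1 ≤ c k := by
      refine indicator_le' (fun z hz => ?_) (fun z _ => hc0 k z)
      have : ((k + 1 : ℕ) : ℝ) ≤ f z := hz
      push_cast at this
      simp only [c, Pi.sup_apply, Pi.inf_apply, Pi.sub_apply, Pi.smul_apply, Pi.one_apply,
        smul_eq_mul, mul_one, Pi.zero_apply]
      grind
    have hcu k : c k ≤ (D k).indicator 1 := by
      intro z
      by_cases hz : z ∈ D k
      · rw [indicator_of_mem hz]
        exact sup_le inf_le_right zero_le_one
      · rw [indicator_of_notMem hz]
        have : f z < k := not_le.1 hz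
        simp only [c, Pi.sup_apply, Pi.inf_apply, Pi.sub_apply, Pi.smul_apply, Pi.one_apply,
          smul_eq_mul, mul_one, Pi.zero_apply]
        grind
    have hii k : Integrable ((D k).indicator (1 : Z → ℝ)) μ :=
      (integrable_const (1 : ℝ)).indicator (hDm k)
    have hi_int k : ∫ z, (D k).indicator (1 : Z → ℝ) z ∂μ = μ.real (D k) :=
      integral_indicator_one (hDm k)
    have hI1 k : μ.real (D (k + 1)) ≤ ∫ z, c k z ∂μ := by
      rw [← hi_int]; exact integral_mono (hii _) (hint (hcL k) (hc0 k)) (hcl k)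
    have hI2 k : ∫ z, c k z ∂μ ≤ μ.real (D k) := by
      rw [← hi_int]; exact integral_mono (hint (hcL k) (hc0 k)) (hii _) (hcu k)
    have hl1 k : μ.real (D (k + 1)) ≤ ℓ (c k) := hupper (hcL k) (hc0 k) (hDm _) (hcl k)
    have hl2 k : ℓ (c k) ≤ μ.real (D k) := hlower (hcL k) (hc0 k) (hDm _) (hcu k)
    have e1 : ∫ z, f z ∂μ = ∑ k ∈ Finset.range K, ∫ z, c k z ∂μ := by
      rw [← integral_finsetSum _ fun k _ => hint (hcL k) (hc0 k)]
      congr 1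
      ext z
      conv_lhs => rw [hsum]
      rw [Finset.sum_apply]
    have e2 : ℓ f = ∑ k ∈ Finset.range K, ℓ (c k) := by
      conv_lhs => rw [hsum]
      rw [map_sum]
    have e3 : ∑ k ∈ Finset.range K, (μ.real (D k) - μ.real (D (k + 1))) ≤ μ.real univ := by
      rw [Finset.sum_range_sub']
      have := measureReal_mono (μ := μ) (subset_univ (D 0))
      have := measureReal_nonneg (μ := μ) (s := D K)
      linarith
    rw [e1, e2, ← Finset.sum_sub_distrib]
    refine (Finset.abs_sum_le_sum_abs _ _).trans (le_trans (Finset.sum_le_sum fun k _ => ?_) e3)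
    rw [abs_le]
    constructor <;> linarith [hI1 k, hI2 k, hl1 k, hl2 k]
  refine ⟨μ, hfin, fun f hf hf0 => ?_⟩
  have hn (n : ℕ) : n * |∫ z, f z ∂μ - ℓ f| ≤ μ.real univ := by
    have := hclose (L.smul_mem (n : ℝ) hf) (smul_nonneg (Nat.cast_nonneg n) hf0)
    simp only [Pi.smul_apply, smul_eq_mul, map_smul] at this
    rw [integral_const_mul, ← mul_sub, abs_mul, Nat.abs_cast] at this
    exact this
  by_contra hne
  have hpos' : 0 < |∫ z, f z ∂μ - ℓ f| := abs_pos.2 (sub_ne_zero.2 hne)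
  obtain ⟨n, hnn⟩ := exists_nat_gt (μ.real univ / |∫ z, f z ∂μ - ℓ f|)
  rw [div_lt_iff₀ hpos'] at hnn
  linarith [hn n]

end Daniell

section Projection

lemma exists_isCompact_subset_range_measure_le {Y : Type*} [MetricSpace Y] [MeasurableSpace Y]
    [OpensMeasurableSpace Y] (μ : Measure Y) [IsFiniteMeasure μ] {f : (ℕ → ℕ) → Y}
    (hf : Continuous f) {ε : ℝ≥0∞} (hε : ε ≠ 0) :
    ∃ K ⊆ range f, IsCompact K ∧ μ (range f) ≤ μ K + ε := by
  obtain ⟨δ, hδ0, hδ⟩ := ENNReal.exists_pos_sum_of_countable hε ℕ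
  have step (k : ℕ) (W : Set (ℕ → ℕ)) :
      ∃ n, μ (f '' W) ≤ μ (f '' (W ∩ {x | x k ≤ n})) + δ k := by
    by_contra! h
    have hmono : Monotone fun n => f '' (W ∩ {x | x k ≤ n}) := fun m n hmn =>
      image_mono (inter_subset_inter_right _ fun x hx => le_trans hx hmn)
    have hU : ⋃ n, f '' (W ∩ {x | x k ≤ n}) = f '' W := by
      rw [← image_iUnion, ← inter_iUnion]
      congr 1
      exact inter_eq_left.2 fun x _ => mem_iUnion.2 ⟨x k, le_refl (x k)⟩
    have h1 : μ (f '' W) + δ k ≤ μ (f '' W) := by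
      conv_lhs => rw [← hU, hmono.measure_iUnion, ENNReal.iSup_add]
      exact iSup_le fun n => (h n).le
    have h2 : μ (f '' W) < μ (f '' W) + δ k :=
      ENNReal.lt_add_right (measure_ne_top _ _) (by simpa using (hδ0 k).ne')
    exact absurd h1 (not_le.2 h2)
  choose N hN using step
  let W : ℕ → Set (ℕ → ℕ) := fun k =>
    Nat.rec univ (fun k W => W ∩ {x | x k ≤ N k W}) k
  let b : ℕ → ℕ := fun k => N k (W k)
  have hW k : W k = {x | ∀ i < k, x i ≤ b i} := by
    induction k with
    | zero => ext x; simp [W]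
    | succ k ih =>
      change W k ∩ {x | x k ≤ b k} = _
      rw [ih]
      ext x
      simp only [mem_inter_iff, mem_ofPred_eq, Nat.lt_succ_iff_lt_or_eq]
      grind
  let K₀ : Set (ℕ → ℕ) := pi univ fun i => Iic (b i)
  have hK₀ : IsCompact K₀ := isCompact_univ_pi fun i => (finite_Iic (b i)).isCompact
  have hsub : ⋂ k, closure (f '' W k) ⊆ f '' K₀ := by
    intro y hy
    have hx k : ∃ x ∈ W k, dist y (f x) < 1 / ((k : ℝ) + 1) := by
      obtain ⟨_, ⟨x, hx, rfl⟩, hd⟩ := Metric.mem_closure_iff.1 (mem_iInter.1 hy k)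
        (1 / ((k : ℝ) + 1)) Nat.one_div_pos_of_nat
      exact ⟨x, hx, hd⟩
    choose x hxW hxd using hx
    let x' : ℕ → ℕ → ℕ := fun k i => if i < k then x k i else 0
    have hx' k : x' k ∈ K₀ := by
      intro i _
      simp only [x', mem_Iic]
      split_ifs with h
      · have := hxW k
        rw [hW] at this
        exact this i h
      · exact Nat.zero_le _
    obtain ⟨a, haK, φ, hφ, ha⟩ := hK₀.tendsto_subseq hx'
    have ha' : Tendsto (fun k => x (φ k)) atTop (𝓝 a) := by
      rw [tendsto_pi_nhds] at ha ⊢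
      intro i
      refine (ha i).congr' ?_
      filter_upwards [hφ.tendsto_atTop.eventually_gt_atTop i] with k hk
      simp [x', hk]
    have h1 : Tendsto (fun k => f (x (φ k))) atTop (𝓝 (f a)) := (hf.tendsto a).comp ha'
    have h2 : Tendsto (fun k => f (x (φ k))) atTop (𝓝 y) := by
      have h3 : Tendsto (fun k => f (x k)) atTop (𝓝 y) := by
        rw [tendsto_iff_dist_tendsto_zero]
        refine squeeze_zero (fun _ => dist_nonneg) (fun k => ?_)
          tendsto_one_div_add_atTop_nhds_zero_nat
        rw [dist_comm]
        exact (hxd k).le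
      exact h3.comp hφ.tendsto_atTop
    exact ⟨a, haK, tendsto_nhds_unique h1 h2⟩
  have hsum k : μ (range f) ≤ μ (f '' W k) + ∑ i ∈ Finset.range k, (δ i : ℝ≥0∞) := by
    induction k with
    | zero => simp [W]
    | succ k ih =>
      refine ih.trans ?_
      rw [Finset.sum_range_succ, add_comm _ (δ k : ℝ≥0∞), ← add_assoc]
      gcongr
      exact hN k (W k)
  have hanti : Antitone fun k => closure (f '' W k) :=
    antitone_nat_of_succ_le fun k => closure_mono (image_mono inter_subset_left)
  refine ⟨f '' K₀, image_subset_range _ _, hK₀.image hf, ?_⟩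
  have hle : μ (range f) ≤ μ (⋂ k, closure (f '' W k)) + ε := by
    rw [hanti.measure_iInter (fun k => isClosed_closure.measurableSet.nullMeasurableSet)
      ⟨0, measure_ne_top _ _⟩, ENNReal.iInf_add]
    refine le_iInf fun k => (hsum k).trans ?_
    gcongr
    · exact subset_closure
    · exact (ENNReal.sum_le_tsum _).trans hδ.le
  exact hle.trans (by gcongr)

/-- Analytic sets are universally measurable. -/
theorem AnalyticSet.nullMeasurableSet' {Y : Type*} [MetricSpace Y] [MeasurableSpace Y]
    [OpensMeasurableSpace Y] {A : Set Y} (hA : AnalyticSet A) (μ : Measure Y)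
    [IsFiniteMeasure μ] : NullMeasurableSet A μ := by
  rw [AnalyticSet] at hA
  rcases hA with rfl | ⟨f, hf, rfl⟩
  · exact MeasurableSet.empty.nullMeasurableSet
  have h (n : ℕ) := exists_isCompact_subset_range_measure_le μ hf
    (ε := ((n : ℝ≥0∞) + 1)⁻¹) (by simp)
  choose K hKsub hK hμ using h
  have hB : MeasurableSet (⋃ n, K n) := MeasurableSet.iUnion fun n => (hK n).measurableSet
  have hle : μ (range f) ≤ μ (⋃ n, K n) := by
    have hn (n : ℕ) : μ (range f) ≤ μ (⋃ n, K n) + ((n : ℝ≥0∞) + 1)⁻¹ :=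
      (hμ n).trans (by gcongr; exact subset_iUnion K n)
    have ht : Tendsto (fun n : ℕ => μ (⋃ n, K n) + ((n : ℝ≥0∞) + 1)⁻¹) atTop
        (𝓝 (μ (⋃ n, K n) + 0)) := by
      refine Tendsto.const_add _ ?_
      have := (tendsto_add_atTop_iff_nat 1).2 ENNReal.tendsto_inv_nat_nhds_zero
      simpa using this
    simpa using ge_of_tendsto' ht hn
  have hae : (⋃ n, K n : Set Y) =ᵐ[μ] toMeasurable μ (range f) :=
    ae_eq_of_subset_of_measure_ge ((iUnion_subset hKsub).trans (subset_toMeasurable _ _))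
      (by rwa [measure_toMeasurable]) hB.nullMeasurableSet (measure_ne_top _ _)
  have : (⋃ n, K n : Set Y) =ᵐ[μ] range f :=
    (iUnion_subset hKsub).eventuallyLE.antisymm
      ((subset_toMeasurable μ _).eventuallyLE.trans hae.symm.le)
  exact hB.nullMeasurableSet.congr this

/-- Every measurable set in a product is the pullback of a measurable set in a product whose first
factor is a standard Borel space. -/
lemma exists_standardBorel_preimage_eq {Ω X : Type*} [MeasurableSpace Ω] [MeasurableSpace X]
    {D : Set (Ω × X)} (hD : MeasurableSet D) :
    ∃ (Y : Type) (_ : MeasurableSpace Y) (_ : StandardBorelSpace Y) (φ : Ω → Y)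
      (D₀ : Set (Y × X)), Measurable φ ∧ MeasurableSet D₀ ∧ D = Prod.map φ id ⁻¹' D₀ := by
  classical
  refine MeasurableSpace.induction_on_inter
    (C := fun D _ => ∃ (Y : Type) (_ : MeasurableSpace Y) (_ : StandardBorelSpace Y) (φ : Ω → Y)
      (D₀ : Set (Y × X)), Measurable φ ∧ MeasurableSet D₀ ∧ D = Prod.map φ id ⁻¹' D₀)
    generateFrom_prod.symm isPiSystem_prod ?_ ?_ ?_ ?_ D hD
  · exact ⟨Unit, inferInstance, inferInstance, fun _ => (), ∅, measurable_const,
      MeasurableSet.empty, rfl⟩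
  · rintro _ ⟨A, hA, B, hB, rfl⟩
    have hpre : (fun ω => decide (ω ∈ A)) ⁻¹' {true} = A := by
      ext
      simp
    refine ⟨Bool, inferInstance, inferInstance, fun ω => decide (ω ∈ A), {true} ×ˢ B,
      measurable_to_bool (by rw [hpre]; exact hA), (measurableSet_singleton _).prod hB, ?_⟩
    ext ⟨ω, x⟩
    simp
  · rintro D - ⟨Y, _, _, φ, D₀, hφ, hD₀, rfl⟩
    exact ⟨Y, _, ‹_›, φ, D₀ᶜ, hφ, hD₀.compl, rfl⟩
  · intro D _ _ h
    choose Y hY hYs φ D₀ hφ hD₀ hDeq using h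
    refine ⟨∀ n, Y n, inferInstance, inferInstance, fun ω n => φ n ω,
      ⋃ n, Prod.map (fun y => y n) id ⁻¹' D₀ n, measurable_pi_lambda _ hφ,
      MeasurableSet.iUnion fun n => ((measurable_pi_apply n).prodMap measurable_id) (hD₀ n), ?_⟩
    rw [preimage_iUnion]
    exact iUnion_congr fun n => hDeq n

/-- **Measurable projection theorem.** -/
theorem measurableSet_image_fst {Ω X : Type*} [MeasurableSpace Ω] (P : Measure Ω)
    [IsFiniteMeasure P] [P.IsComplete] [MeasurableSpace X] [StandardBorelSpace X]
    {D : Set (Ω × X)} (hD : MeasurableSet D) : MeasurableSet (Prod.fst '' D) := by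
  obtain ⟨Y, _, _, φ, D₀, hφ, hD₀, rfl⟩ := exists_standardBorel_preimage_eq hD
  let := upgradeStandardBorel Y
  let := TopologicalSpace.upgradeIsCompletelyMetrizable Y
  have hA : AnalyticSet (Prod.fst '' D₀) := hD₀.analyticSet_image measurable_fst
  have hnull := (AnalyticSet.nullMeasurableSet' hA (P.map φ)).preimage
    (hφ.quasiMeasurePreserving P)
  have : Prod.fst '' (Prod.map φ id ⁻¹' D₀ : Set (Ω × X)) = φ ⁻¹' (Prod.fst '' D₀) := by
    ext ω
    simp
  rw [this]
  exact hnull.measurable_of_complete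

end Projection

section Ergodic

/-- Two bounded real sequences whose difference tends to zero have comparable upper limits. -/
lemma limsup_le_of_tendsto_sub {u v : ℕ → ℝ} {C : ℝ} (hu : ∀ n, |u n| ≤ C)
    (h : Tendsto (fun n => v n - u n) atTop (𝓝 0)) :
    limsup v atTop ≤ limsup u atTop := by
  have hu' : IsBoundedUnder (· ≤ ·) atTop u := isBoundedUnder_of ⟨C, fun n => (abs_le.1 (hu n)).2⟩
  have hu'' : IsBoundedUnder (· ≥ ·) atTop u := isBoundedUnder_of ⟨-C, fun n => (abs_le.1 (hu n)).1⟩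
  calc limsup v atTop = limsup (u + fun n => v n - u n) atTop := by
        congr 1
        ext n
        simp
    _ ≤ limsup u atTop + limsup (fun n => v n - u n) atTop :=
        limsup_add_le hu'' hu' h.isBoundedUnder_ge.isCoboundedUnder_le h.isBoundedUnder_le
    _ = limsup u atTop := by rw [h.limsup_eq, add_zero]

variable {Ω : Type*} {θ : Ω → Ω} {g : Ω → ℝ}

lemma integral_comp_of_measurePreserving {Ω Ω' : Type*} [MeasurableSpace Ω] [MeasurableSpace Ω']
    {P : Measure Ω} {Q : Measure Ω'} {φ : Ω → Ω'} (hφ : MeasurePreserving φ P Q) {f : Ω' → ℝ}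
    (hf : Measurable f) : ∫ ω, f (φ ω) ∂P = ∫ ω, f ω ∂Q := by
  rw [← hφ.map_eq, integral_map hφ.measurable.aemeasurable hf.aestronglyMeasurable]

lemma birkhoffAverage_mem_Icc {a b : ℝ} (ha : a ≤ 0) (hb : 0 ≤ b) (h : ∀ ω, g ω ∈ Icc a b) (n : ℕ)
    (ω : Ω) : birkhoffAverage ℝ θ g n ω ∈ Icc a b := by
  rcases Nat.eq_zero_or_pos n with rfl | hn
  · simp [ha, hb]
  have hn' : (0 : ℝ) < n := by exact_mod_cast hn
  have h1 : birkhoffSum θ g n ω ≤ n * b := by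
    simpa [birkhoffSum] using Finset.sum_le_card_nsmul (Finset.range n) (fun k => g (θ^[k] ω)) b
      fun k _ => (h _).2
  have h2 : n * a ≤ birkhoffSum θ g n ω := by
    simpa [birkhoffSum] using Finset.card_nsmul_le_sum (Finset.range n) (fun k => g (θ^[k] ω)) a
      fun k _ => (h _).1
  rw [birkhoffAverage, smul_eq_mul, inv_mul_eq_div]
  exact ⟨by rw [le_div_iff₀ hn']; linarith, by rw [div_le_iff₀ hn']; linarith⟩

lemma measurable_birkhoffAverage [MeasurableSpace Ω] (hθ : Measurable θ) (hg : Measurable g)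
    (n : ℕ) : Measurable (birkhoffAverage ℝ θ g n) := by
  have : birkhoffAverage ℝ θ g n =
      fun ω => (n : ℝ)⁻¹ * ∑ k ∈ Finset.range n, g (θ^[k] ω) := rfl
  rw [this]
  exact measurable_const.mul (Finset.measurable_sum _ fun k _ => hg.comp (hθ.iterate k))

/-- Along an orbit with a covering of good times of length at most `M`, Birkhoff sums are bounded
below. -/
lemma sub_mul_le_birkhoffSum {c g' : Ω → ℝ} {B : Set Ω} {M : ℕ} (hM : 1 ≤ M)
    (hc0 : ∀ ω, 0 ≤ c ω) (hc1 : ∀ ω, c ω ≤ 1) (hcθ : ∀ ω, c (θ ω) = c ω) (hg' : ∀ ω, 0 ≤ g' ω)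
    (hB : ∀ ω ∈ B, ∃ n, 1 ≤ n ∧ n ≤ M ∧ n * c ω ≤ birkhoffSum θ g' n ω) (hBc : ∀ ω ∉ B, g' ω = 1)
    (K : ℕ) (ω : Ω) : ((K : ℝ) - M) * c ω ≤ birkhoffSum θ g' K ω := by
  have hcn : ∀ n ω, c (θ^[n] ω) = c ω := by
    intro n
    induction n with
    | zero => intro ω; rfl
    | succ n ih => intro ω; rw [Function.iterate_succ_apply, ih, hcθ]
  induction K using Nat.strong_induction_on generalizing ω with
  | _ K ih =>
    rcases le_or_gt K M with hK | hK
    · have : (K : ℝ) ≤ M := by exact_mod_cast hK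
      exact (mul_nonpos_of_nonpos_of_nonneg (by linarith) (hc0 ω)).trans
        (Finset.sum_nonneg fun k _ => hg' _)
    obtain ⟨n, hn1, hnM, hn⟩ : ∃ n, 1 ≤ n ∧ n ≤ M ∧ n * c ω ≤ birkhoffSum θ g' n ω := by
      by_cases hω : ω ∈ B
      · exact hB ω hω
      · exact ⟨1, le_rfl, hM, by simpa [hBc ω hω] using hc1 ω⟩
    obtain ⟨k, rfl⟩ := Nat.exists_eq_add_of_le (hnM.trans hK.le)
    have := ih k (by omega) (θ^[n] ω)
    rw [birkhoffSum_add, ← sub_nonneg]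
    rw [hcn] at this
    push_cast
    linarith

/-- The integral of the upper Birkhoff average is at most the integral of the function. -/
theorem integral_limsup_birkhoffAverage_le [MeasurableSpace Ω] {P : Measure Ω}
    [IsProbabilityMeasure P] (hθ : MeasurePreserving θ P P) (hg : Measurable g)
    (hg01 : ∀ ω, g ω ∈ Icc (0 : ℝ) 1) :
    ∫ ω, limsup (fun n => birkhoffAverage ℝ θ g n ω) atTop ∂P ≤ ∫ ω, g ω ∂P := by
  set G : Ω → ℝ := fun ω => limsup (fun n => birkhoffAverage ℝ θ g n ω) atTop with hG
  have hA : ∀ n ω, birkhoffAverage ℝ θ g n ω ∈ Icc (0 : ℝ) 1 :=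
    birkhoffAverage_mem_Icc le_rfl zero_le_one hg01
  have hAabs : ∀ n ω, |birkhoffAverage ℝ θ g n ω| ≤ 1 := fun n ω =>
    abs_le.2 ⟨by linarith [(hA n ω).1], (hA n ω).2⟩
  have hGm : Measurable G := Measurable.limsup fun n => measurable_birkhoffAverage hθ.measurable hg n
  have hbu : ∀ ω, IsBoundedUnder (· ≤ ·) atTop fun n => birkhoffAverage ℝ θ g n ω :=
    fun ω => isBoundedUnder_of ⟨1, fun n => (hA n ω).2⟩
  have hbl : ∀ ω, IsBoundedUnder (· ≥ ·) atTop fun n => birkhoffAverage ℝ θ g n ω :=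
    fun ω => isBoundedUnder_of ⟨0, fun n => (hA n ω).1⟩
  have hG01 : ∀ ω, G ω ∈ Icc (0 : ℝ) 1 := fun ω =>
    ⟨le_limsup_of_frequently_le (Frequently.of_forall fun n => (hA n ω).1) (hbu ω),
      limsup_le_of_le (hbl ω).isCoboundedUnder_le (Eventually.of_forall fun n => (hA n ω).2)⟩
  have hGθ : ∀ ω, G (θ ω) = G ω := by
    intro ω
    have ht := tendsto_birkhoffAverage_apply_sub_birkhoffAverage ℝ (f := θ) (g := g) (x := ω)
      ((Metric.isBounded_Icc (0 : ℝ) 1).subset (range_subset_iff.2 fun n => hg01 _))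
    refine le_antisymm (limsup_le_of_tendsto_sub (hAabs · ω) ht)
      (limsup_le_of_tendsto_sub (hAabs · (θ ω)) ?_)
    simpa using ht.neg
  have hint : ∀ {f : Ω → ℝ}, Measurable f → (∀ ω, f ω ∈ Icc (0 : ℝ) 1) → Integrable f P :=
    fun hf h => Integrable.of_bound hf.aestronglyMeasurable 1 (Eventually.of_forall fun ω => by
      rw [Real.norm_eq_abs, abs_of_nonneg (h ω).1]
      exact (h ω).2)
  refine le_of_forall_pos_le_add fun δ hδ => ?_
  obtain ⟨ε, hε, rfl⟩ : ∃ ε > 0, δ = ε + ε := ⟨δ / 2, by linarith, by ring⟩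
  set c : Ω → ℝ := fun ω => max (G ω - ε) 0 with hc
  have hcm : Measurable c := (hGm.sub_const ε).max measurable_const
  have hc0 : ∀ ω, 0 ≤ c ω := fun ω => le_max_right _ _
  have hc1 : ∀ ω, c ω ≤ 1 := fun ω => max_le (by linarith [(hG01 ω).2]) zero_le_one
  have hcθ : ∀ ω, c (θ ω) = c ω := fun ω => by simp only [hc, hGθ]
  let B : ℕ → Set Ω := fun M => {ω | ∃ n, 1 ≤ n ∧ n ≤ M ∧ n * c ω ≤ birkhoffSum θ g n ω}
  have hSm : ∀ n, Measurable (birkhoffSum θ g n) := fun n =>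
    Finset.measurable_sum _ fun k _ => hg.comp (hθ.measurable.iterate k)
  have hBm : ∀ M, MeasurableSet (B M) := by
    intro M
    have : B M = ⋃ n ∈ Set.Icc 1 M, {ω | n * c ω ≤ birkhoffSum θ g n ω} := by
      ext ω
      simp [B, and_assoc]
    rw [this]
    exact MeasurableSet.biUnion (to_countable _) fun n _ =>
      measurableSet_le (measurable_const.mul hcm) (hSm n)
  have hBmono : Antitone fun M => (B M)ᶜ := fun M M' h =>
    compl_subset_compl.2 fun ω ⟨n, h1, h2, h3⟩ => ⟨n, h1, h2.trans h, h3⟩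
  have hBU : ⋂ M, (B M)ᶜ = ∅ := by
    rw [← compl_iUnion, compl_empty_iff, eq_univ_iff_forall]
    intro ω
    suffices h : ∃ n : ℕ, 1 ≤ n ∧ n * c ω ≤ birkhoffSum θ g n ω by
      obtain ⟨n, h1, h2⟩ := h
      exact mem_iUnion.2 ⟨n, n, h1, le_rfl, h2⟩
    rcases le_or_gt (G ω - ε) 0 with h0 | h0
    · refine ⟨1, le_rfl, ?_⟩
      simpa [hc, h0] using (hg01 ω).1
    · have hlt : G ω - ε < limsup (fun n => birkhoffAverage ℝ θ g n ω) atTop := by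
        change G ω - ε < G ω
        linarith
      obtain ⟨n, h1, hn⟩ := ((frequently_lt_of_lt_limsup (hbl ω).isCoboundedUnder_le hlt
        ).and_eventually (eventually_ge_atTop 1)).exists.imp fun n h => And.symm h
      refine ⟨n, h1, ?_⟩
      have hn' : (0 : ℝ) < n := by exact_mod_cast h1
      rw [birkhoffAverage, smul_eq_mul, inv_mul_eq_div, lt_div_iff₀ hn'] at hn
      rw [hc]
      simp only [max_eq_left h0.le]
      linarith
  have htend : Tendsto (fun M => P.real (B M)ᶜ) atTop (𝓝 0) := by
    have := tendsto_measure_iInter_atTop (μ := P) (fun M => (hBm M).compl.nullMeasurableSet) hBmono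
      ⟨0, measure_ne_top _ _⟩
    rw [hBU, measure_empty] at this
    exact (ENNReal.tendsto_toReal ENNReal.zero_ne_top).comp this
  obtain ⟨M, hMε, hM1⟩ := ((htend.eventually_lt_const hε).and (eventually_ge_atTop 1)).exists
  classical
  set g' : Ω → ℝ := fun ω => if ω ∈ B M then g ω else 1 with hg'
  have hg'm : Measurable g' := Measurable.ite (hBm M) hg measurable_const
  have hg'01 : ∀ ω, g' ω ∈ Icc (0 : ℝ) 1 := by
    intro ω
    simp only [hg']
    split_ifs
    exacts [hg01 ω, ⟨zero_le_one, le_rfl⟩]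
  have hgg' : ∀ ω, g ω ≤ g' ω := by
    intro ω
    simp only [hg']
    split_ifs
    exacts [le_rfl, (hg01 ω).2]
  have hkey := sub_mul_le_birkhoffSum (θ := θ) (c := c) (g' := g') (B := B M) hM1 hc0 hc1 hcθ
    (fun ω => (hg'01 ω).1)
    (fun ω ⟨n, h1, h2, h3⟩ => ⟨n, h1, h2, h3.trans (Finset.sum_le_sum fun k _ => hgg' _)⟩)
    (fun ω hω => by simp [hg', hω])
  have hg'int : Integrable g' P := hint hg'm hg'01
  have hcint : Integrable c P := hint hcm fun ω => ⟨hc0 ω, hc1 ω⟩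
  have hsum : ∀ K : ℕ, ∫ ω, birkhoffSum θ g' K ω ∂P = K * ∫ ω, g' ω ∂P := by
    intro K
    have h (k : ℕ) : Integrable (fun ω => g' (θ^[k] ω)) P :=
      (hθ.iterate k).integrable_comp_of_integrable hg'int
    simp only [birkhoffSum]
    rw [integral_finsetSum _ fun k _ => h k,
      Finset.sum_congr rfl fun k _ => integral_comp_of_measurePreserving (hθ.iterate k) hg'm]
    simp
  have hineq : ∀ K : ℕ, ((K : ℝ) - M) * ∫ ω, c ω ∂P ≤ K * ∫ ω, g' ω ∂P := by
    intro K
    rw [← hsum, ← integral_const_mul]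
    exact integral_mono (hcint.const_mul _) (integrable_finsetSum _ fun k _ =>
      (hθ.iterate k).integrable_comp_of_integrable hg'int) (hkey K)
  have hcg' : ∫ ω, c ω ∂P ≤ ∫ ω, g' ω ∂P := by
    by_contra! hlt
    obtain ⟨K, hK⟩ := exists_nat_gt ((M * ∫ ω, c ω ∂P) / (∫ ω, c ω ∂P - ∫ ω, g' ω ∂P))
    rw [div_lt_iff₀ (by linarith)] at hK
    linarith [hineq K]
  have hg'g : ∫ ω, g' ω ∂P ≤ ∫ ω, g ω ∂P + ε := by
    have h1 : ∫ ω, g' ω ∂P ≤ ∫ ω, (g ω + (B M)ᶜ.indicator 1 ω) ∂P := by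
      refine integral_mono hg'int ((hint hg hg01).add
        ((integrable_const (1 : ℝ)).indicator (hBm M).compl)) fun ω => ?_
      by_cases hω : ω ∈ B M
      · simp [hg', hω]
      · simpa [hg', hω] using (hg01 ω).1
    have h2 : ∫ ω, (g ω + (B M)ᶜ.indicator 1 ω) ∂P = ∫ ω, g ω ∂P + P.real (B M)ᶜ := by
      rw [← integral_indicator_one (hBm M).compl]
      exact integral_add (hint hg hg01) ((integrable_const (1 : ℝ)).indicator (hBm M).compl)
    linarith
  have hGc : ∫ ω, G ω ∂P ≤ ∫ ω, c ω ∂P + ε := by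
    calc ∫ ω, G ω ∂P ≤ ∫ ω, (c ω + ε) ∂P :=
          integral_mono (hint hGm hG01) (hcint.add (integrable_const ε)) fun ω => by
            have := le_max_left (G ω - ε) 0
            simp only [hc]
            linarith
      _ = ∫ ω, c ω ∂P + ε := by
          rw [integral_add hcint (integrable_const ε)]
          simp
  linarith

end Ergodic

section FiberSup

/-- The bounded measurable real functions. -/
def boundedMeasurable (Z : Type*) [MeasurableSpace Z] : Submodule ℝ (Z → ℝ) where
  carrier := {f | Measurable f ∧ ∃ C, ∀ z, |f z| ≤ C}
  zero_mem' := ⟨measurable_const, 0, by simp⟩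
  add_mem' := by
    rintro f g ⟨hf, C, hC⟩ ⟨hg, D, hD⟩
    exact ⟨hf.add hg, C + D, fun z => (abs_add_le _ _).trans (add_le_add (hC z) (hD z))⟩
  smul_mem' := by
    rintro c f ⟨hf, C, hC⟩
    refine ⟨hf.const_smul c, |c| * C, fun z => ?_⟩
    rw [Pi.smul_apply, smul_eq_mul, abs_mul]
    exact mul_le_mul_of_nonneg_left (hC z) (abs_nonneg c)

lemma comp_mem_boundedMeasurable {Y Z : Type*} [MeasurableSpace Y] [MeasurableSpace Z] {f : Z → ℝ}
    (hf : f ∈ boundedMeasurable Z) {φ : Y → Z} (hφ : Measurable φ) :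
    f ∘ φ ∈ boundedMeasurable Y :=
  ⟨hf.1.comp hφ, hf.2.imp fun _ h _ => h _⟩

lemma indicator_one_mem_boundedMeasurable {Z : Type*} [MeasurableSpace Z] {A : Set Z}
    (hA : MeasurableSet A) : A.indicator (1 : Z → ℝ) ∈ boundedMeasurable Z := by
  classical
  refine ⟨measurable_one.indicator hA, 1, fun z => ?_⟩
  by_cases hz : z ∈ A <;> simp [hz]

lemma integrable_of_mem_boundedMeasurable {Z : Type*} [MeasurableSpace Z] {μ : Measure Z}
    [IsFiniteMeasure μ] {f : Z → ℝ} (hf : f ∈ boundedMeasurable Z) : Integrable f μ :=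
  let ⟨hm, C, hC⟩ := hf
  Integrable.of_bound hm.aestronglyMeasurable C (Eventually.of_forall hC)

variable {Ω X : Type*}

/-- The supremum of `f` over the fiber of `E`. -/
noncomputable def fiberSup (E : Set (Ω × X)) (f : Ω × X → ℝ) (ω : Ω) : ℝ :=
  ⨆ x : fiber E ω, f (ω, x)

variable {E : Set (Ω × X)} {f g : Ω × X → ℝ}

lemma fiberSup_le (hne : ∀ ω, (fiber E ω).Nonempty) {ω : Ω} {a : ℝ}
    (h : ∀ x, (ω, x) ∈ E → f (ω, x) ≤ a) : fiberSup E f ω ≤ a :=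
  have := (hne ω).to_subtype
  ciSup_le fun x => h x x.2

lemma le_fiberSup {C : ℝ} (hC : ∀ z, |f z| ≤ C) {ω : Ω} {x : X} (hx : (ω, x) ∈ E) :
    f (ω, x) ≤ fiberSup E f ω :=
  le_ciSup (f := fun x : fiber E ω => f (ω, x))
    ⟨C, forall_mem_range.2 fun _ => (abs_le.1 (hC _)).2⟩ ⟨x, hx⟩

lemma lt_fiberSup_iff (hne : ∀ ω, (fiber E ω).Nonempty) {C : ℝ} (hC : ∀ z, |f z| ≤ C) {ω : Ω}
    {a : ℝ} : a < fiberSup E f ω ↔ ∃ x, (ω, x) ∈ E ∧ a < f (ω, x) := by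
  refine ⟨fun h => ?_, fun ⟨x, hx, h⟩ => h.trans_le (le_fiberSup hC hx)⟩
  by_contra! h'
  exact h.not_ge (fiberSup_le hne h')

lemma abs_fiberSup_le (hne : ∀ ω, (fiber E ω).Nonempty) {C : ℝ} (hC : ∀ z, |f z| ≤ C) (ω : Ω) :
    |fiberSup E f ω| ≤ C := by
  obtain ⟨x, hx⟩ := hne ω
  exact abs_le.2 ⟨(abs_le.1 (hC _)).1.trans (le_fiberSup hC hx),
    fiberSup_le hne fun x _ => (abs_le.1 (hC _)).2⟩

variable [MeasurableSpace Ω]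

/-- The integral of the fiberwise supremum. -/
noncomputable def integralFiberSup (P : Measure Ω) (E : Set (Ω × X)) (f : Ω × X → ℝ) : ℝ :=
  ∫ ω, fiberSup E f ω ∂P

lemma abs_integralFiberSup_le {P : Measure Ω} [IsProbabilityMeasure P]
    (hne : ∀ ω, (fiber E ω).Nonempty) {C : ℝ} (hC : ∀ z, |f z| ≤ C) :
    |integralFiberSup P E f| ≤ C := by
  have := norm_integral_le_of_norm_le_const (μ := P) (f := fiberSup E f) (C := C)
    (Eventually.of_forall fun ω => abs_fiberSup_le hne hC ω)
  simpa [integralFiberSup] using this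

variable [MeasurableSpace X]

lemma fiberSup_mem_boundedMeasurable [StandardBorelSpace X] (P : Measure Ω) [IsFiniteMeasure P]
    [P.IsComplete] (hE : MeasurableSet E) (hne : ∀ ω, (fiber E ω).Nonempty)
    (hf : f ∈ boundedMeasurable (Ω × X)) : fiberSup E f ∈ boundedMeasurable Ω := by
  obtain ⟨hm, C, hC⟩ := hf
  refine ⟨measurable_of_Ioi fun a => ?_, C, abs_fiberSup_le hne hC⟩
  have : fiberSup E f ⁻¹' Ioi a = Prod.fst '' (E ∩ f ⁻¹' Ioi a) := by
    ext ω
    simp [lt_fiberSup_iff hne hC]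
  rw [this]
  exact measurableSet_image_fst P (hE.inter (hm measurableSet_Ioi))

variable [StandardBorelSpace X] {P : Measure Ω} [IsProbabilityMeasure P] [P.IsComplete]

lemma integrable_fiberSup (hE : MeasurableSet E) (hne : ∀ ω, (fiber E ω).Nonempty)
    (hf : f ∈ boundedMeasurable (Ω × X)) : Integrable (fiberSup E f) P :=
  integrable_of_mem_boundedMeasurable (fiberSup_mem_boundedMeasurable P hE hne hf)

lemma integralFiberSup_le (hE : MeasurableSet E) (hne : ∀ ω, (fiber E ω).Nonempty)
    (hf : f ∈ boundedMeasurable (Ω × X)) {a : Ω → ℝ} (ha : Integrable a P)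
    (h : ∀ᵐ ω ∂P, ∀ x, (ω, x) ∈ E → f (ω, x) ≤ a ω) : integralFiberSup P E f ≤ ∫ ω, a ω ∂P :=
  integral_mono_ae (integrable_fiberSup hE hne hf) ha (h.mono fun _ h => fiberSup_le hne h)

lemma integralFiberSup_add_le (hE : MeasurableSet E) (hne : ∀ ω, (fiber E ω).Nonempty)
    (hf : f ∈ boundedMeasurable (Ω × X)) (hg : g ∈ boundedMeasurable (Ω × X)) :
    integralFiberSup P E (f + g) ≤ integralFiberSup P E f + integralFiberSup P E g := by
  obtain ⟨C, hC⟩ := hf.2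
  obtain ⟨D, hD⟩ := hg.2
  have hf' := integrable_fiberSup (P := P) hE hne hf
  have hg' := integrable_fiberSup (P := P) hE hne hg
  unfold integralFiberSup
  rw [← integral_add hf' hg']
  exact integralFiberSup_le hE hne (add_mem hf hg) (hf'.add hg')
    (Eventually.of_forall fun _ x hx => add_le_add (le_fiberSup hC hx) (le_fiberSup hD hx))

lemma integralFiberSup_smul_le (hE : MeasurableSet E) (hne : ∀ ω, (fiber E ω).Nonempty)
    (hf : f ∈ boundedMeasurable (Ω × X)) {c : ℝ} (hc : 0 ≤ c) :
    integralFiberSup P E (c • f) ≤ c * integralFiberSup P E f := by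
  obtain ⟨C, hC⟩ := hf.2
  unfold integralFiberSup
  rw [← integral_const_mul]
  exact integralFiberSup_le hE hne (Submodule.smul_mem _ c hf)
    ((integrable_fiberSup hE hne hf).const_mul c)
    (Eventually.of_forall fun _ x hx => mul_le_mul_of_nonneg_left (le_fiberSup hC hx) hc)

lemma integralFiberSup_smul (hE : MeasurableSet E) (hne : ∀ ω, (fiber E ω).Nonempty)
    (hf : f ∈ boundedMeasurable (Ω × X)) {c : ℝ} (hc : 0 < c) :
    integralFiberSup P E (c • f) = c * integralFiberSup P E f := by
  refine (integralFiberSup_smul_le hE hne hf hc.le).antisymm ?_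
  have := integralFiberSup_smul_le (P := P) hE hne (Submodule.smul_mem _ c hf)
    (inv_nonneg.2 hc.le)
  rwa [inv_smul_smul₀ hc.ne', inv_mul_eq_div, le_div_iff₀ hc, mul_comm] at this

end FiberSup

section Skew

variable {Ω X : Type*}

/-- The skew product of a bundle random dynamical system. -/
def skew (T : Ω → X → X) (θ : Ω → Ω) (p : Ω × X) : Ω × X := (θ p.1, T p.1 p.2)

variable {T : Ω → X → X} {θ : Ω → Ω} {E : Set (Ω × X)}

lemma iterate_skew (n : ℕ) (ω : Ω) (x : X) :
    (skew T θ)^[n] (ω, x) = (θ^[n] ω, itr T θ n ω x) := by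
  induction n generalizing ω x with
  | zero => rfl
  | succ n ih => exact ih (θ ω) (T ω x)

/-- The orbits of almost all fibers stay in `E`. -/
lemma ae_iterate_skew_mem [MeasurableSpace Ω] {P : Measure Ω} (hθ : MeasurePreserving θ P P)
    (hT : ∀ᵐ ω ∂P, MapsTo (T ω) (fiber E ω) (fiber E (θ ω))) :
    ∀ᵐ ω ∂P, ∀ x, (ω, x) ∈ E → ∀ n, (skew T θ)^[n] (ω, x) ∈ E := by
  have h : ∀ᵐ ω ∂P, ∀ n, MapsTo (T (θ^[n] ω)) (fiber E (θ^[n] ω)) (fiber E (θ (θ^[n] ω))) :=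
    ae_all_iff.2 fun n => (hθ.iterate n).quasiMeasurePreserving.ae hT
  refine h.mono fun ω hω x hx n => ?_
  induction n with
  | zero => exact hx
  | succ n ih =>
    rw [iterate_skew] at ih
    rw [Function.iterate_succ_apply', iterate_skew]
    exact hω n ih

lemma measurable_skew [MeasurableSpace Ω] [MeasurableSpace X] (hθ : Measurable θ)
    (hT : Measurable fun p : Ω × X => T p.1 p.2) : Measurable (skew T θ) :=
  (hθ.comp measurable_fst).prodMk hT

end Skew

section LimitFunctional

lemma birkhoffAverage_mem_boundedMeasurable {Z : Type*} [MeasurableSpace Z] {S : Z → Z}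
    (hS : Measurable S) {f : Z → ℝ} (hf : f ∈ boundedMeasurable Z) (n : ℕ) :
    birkhoffAverage ℝ S f n ∈ boundedMeasurable Z := by
  have : birkhoffAverage ℝ S f n = (n : ℝ)⁻¹ • ∑ k ∈ Finset.range n, f ∘ S^[k] := by
    ext z
    simp [birkhoffAverage, birkhoffSum]
  rw [this]
  exact Submodule.smul_mem _ _
    (Submodule.sum_mem _ fun k _ => comp_mem_boundedMeasurable hf (hS.iterate k))

lemma abs_birkhoffAverage_le {Z : Type*} {S : Z → Z} {f : Z → ℝ} {C : ℝ} (hC : ∀ z, |f z| ≤ C)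
    (n : ℕ) (z : Z) : |birkhoffAverage ℝ S f n z| ≤ C := by
  have hC0 : 0 ≤ C := (abs_nonneg _).trans (hC z)
  exact abs_le.2 (birkhoffAverage_mem_Icc (neg_nonpos.2 hC0) hC0 (fun z => abs_le.1 (hC z)) n z)

lemma birkhoffAverage_smul {Z : Type*} (S : Z → Z) (f : Z → ℝ) (c : ℝ) (n : ℕ) :
    birkhoffAverage ℝ S (c • f) n = c • birkhoffAverage ℝ S f n := by
  ext z
  simp only [birkhoffAverage, birkhoffSum, Pi.smul_apply, smul_eq_mul, ← Finset.mul_sum]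
  ring

variable {Ω X : Type*} [MeasurableSpace Ω]

/-- The upper limit of the integrals of the fiberwise suprema of the Birkhoff averages of `f`. -/
noncomputable def upperIntegral (P : Measure Ω) (T : Ω → X → X) (θ : Ω → Ω) (E : Set (Ω × X))
    (f : Ω × X → ℝ) : ℝ :=
  limsup (fun n => integralFiberSup P E (birkhoffAverage ℝ (skew T θ) f n)) atTop

lemma abs_integralFiberSup_birkhoffAverage_le {P : Measure Ω} [IsProbabilityMeasure P]
    {S : Ω × X → Ω × X} {E : Set (Ω × X)} {f : Ω × X → ℝ} (hne : ∀ ω, (fiber E ω).Nonempty) {C : ℝ}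
    (hC : ∀ z, |f z| ≤ C) (n : ℕ) : |integralFiberSup P E (birkhoffAverage ℝ S f n)| ≤ C :=
  abs_integralFiberSup_le hne (abs_birkhoffAverage_le hC n)

variable {P : Measure Ω} [IsProbabilityMeasure P] {T : Ω → X → X} {θ : Ω → Ω} {E : Set (Ω × X)}
  {f g : Ω × X → ℝ}

lemma upperIntegral_le (hne : ∀ ω, (fiber E ω).Nonempty)
    (hf : ∃ C, ∀ z, |f z| ≤ C) {v : ℕ → ℝ} {a : ℝ}
    (hv : Tendsto v atTop (𝓝 a))
    (h : ∀ᶠ n in atTop, integralFiberSup P E (birkhoffAverage ℝ (skew T θ) f n) ≤ v n) :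
    upperIntegral P T θ E f ≤ a := by
  obtain ⟨C, hC⟩ := hf
  rw [← hv.limsup_eq]
  exact limsup_le_limsup h (isBoundedUnder_of ⟨-C, fun n => (abs_le.1
    (abs_integralFiberSup_birkhoffAverage_le (S := skew T θ) hne hC n)).1⟩).isCoboundedUnder_le
    hv.isBoundedUnder_le

lemma le_upperIntegral (hne : ∀ ω, (fiber E ω).Nonempty)
    (hf : ∃ C, ∀ z, |f z| ≤ C) {a : ℝ}
    (h : ∀ᶠ n in atTop, a ≤ integralFiberSup P E (birkhoffAverage ℝ (skew T θ) f n)) :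
    a ≤ upperIntegral P T θ E f := by
  obtain ⟨C, hC⟩ := hf
  exact le_limsup_of_frequently_le h.frequently (isBoundedUnder_of ⟨C, fun n => (abs_le.1
    (abs_integralFiberSup_birkhoffAverage_le (S := skew T θ) hne hC n)).2⟩)

variable [MeasurableSpace X] [StandardBorelSpace X] [P.IsComplete]

lemma upperIntegral_add_le (hE : MeasurableSet E) (hne : ∀ ω, (fiber E ω).Nonempty)
    (hS : Measurable (skew T θ)) (hf : f ∈ boundedMeasurable (Ω × X))
    (hg : g ∈ boundedMeasurable (Ω × X)) :
    upperIntegral P T θ E (f + g) ≤ upperIntegral P T θ E f + upperIntegral P T θ E g := by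
  obtain ⟨C, hC⟩ := hf.2
  obtain ⟨D, hD⟩ := hg.2
  obtain ⟨K, hK⟩ := (add_mem hf hg).2
  have hC' := abs_integralFiberSup_birkhoffAverage_le (P := P) (S := skew T θ) hne hC
  have hD' := abs_integralFiberSup_birkhoffAverage_le (P := P) (S := skew T θ) hne hD
  have hK' := abs_integralFiberSup_birkhoffAverage_le (P := P) (S := skew T θ) hne hK
  have hle : ∀ {u : ℕ → ℝ} {C : ℝ}, (∀ n, |u n| ≤ C) → IsBoundedUnder (· ≤ ·) atTop u :=
    fun h => isBoundedUnder_of ⟨_, fun n => (abs_le.1 (h n)).2⟩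
  have hge : ∀ {u : ℕ → ℝ} {C : ℝ}, (∀ n, |u n| ≤ C) → IsBoundedUnder (· ≥ ·) atTop u :=
    fun h => isBoundedUnder_of ⟨_, fun n => (abs_le.1 (h n)).1⟩
  refine le_trans (limsup_le_limsup (Eventually.of_forall fun n => ?_)
    (hge hK').isCoboundedUnder_le (isBoundedUnder_le_add (hle hC') (hle hD')))
    (limsup_add_le (hge hC') (hle hC') (hge hD').isCoboundedUnder_le (hle hD'))
  simp only [birkhoffAverage_add]
  exact integralFiberSup_add_le hE hne (birkhoffAverage_mem_boundedMeasurable hS hf n)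
    (birkhoffAverage_mem_boundedMeasurable hS hg n)

lemma upperIntegral_smul (hE : MeasurableSet E) (hne : ∀ ω, (fiber E ω).Nonempty)
    (hS : Measurable (skew T θ)) (hf : f ∈ boundedMeasurable (Ω × X)) {c : ℝ} (hc : 0 < c) :
    upperIntegral P T θ E (c • f) = c * upperIntegral P T θ E f := by
  obtain ⟨C, hC⟩ := hf.2
  have hC' := abs_integralFiberSup_birkhoffAverage_le (P := P) (S := skew T θ) hne hC
  have := (monotone_mul_left_of_nonneg hc.le).map_limsup_of_continuousAt
    (F := atTop) (fun n => integralFiberSup P E (birkhoffAverage ℝ (skew T θ) f n))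
    (continuous_const_mul c).continuousAt
    (isBoundedUnder_of ⟨C, fun n => (abs_le.1 (hC' n)).2⟩)
    (isBoundedUnder_of ⟨-C, fun n => (abs_le.1 (hC' n)).1⟩).isCoboundedUnder_le
  unfold upperIntegral
  rw [this]
  congr 1
  ext n
  rw [birkhoffAverage_smul, integralFiberSup_smul hE hne
    (birkhoffAverage_mem_boundedMeasurable hS hf n) hc]
  rfl

lemma upperIntegral_le_integralFiberSup (hE : MeasurableSet E) (hne : ∀ ω, (fiber E ω).Nonempty)
    (hθ : MeasurePreserving θ P P) (hS : Measurable (skew T θ))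
    (hT : ∀ᵐ ω ∂P, MapsTo (T ω) (fiber E ω) (fiber E (θ ω)))
    (hf : f ∈ boundedMeasurable (Ω × X)) :
    upperIntegral P T θ E f ≤ integralFiberSup P E f := by
  obtain ⟨C, hC⟩ := hf.2
  have hb := fiberSup_mem_boundedMeasurable P hE hne hf
  refine upperIntegral_le hne hf.2 tendsto_const_nhds ?_
  filter_upwards [eventually_ge_atTop 1] with n hn
  have hn' : (n : ℝ) ≠ 0 := by positivity
  have hint (k : ℕ) : Integrable (fun ω => fiberSup E f (θ^[k] ω)) P :=
    integrable_of_mem_boundedMeasurable (comp_mem_boundedMeasurable hb (hθ.measurable.iterate k))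
  have hI : ∫ ω, birkhoffAverage ℝ θ (fiberSup E f) n ω ∂P = integralFiberSup P E f := by
    simp only [birkhoffAverage, birkhoffSum, smul_eq_mul]
    rw [integral_const_mul, integral_finsetSum _ fun k _ => hint k,
      Finset.sum_congr rfl fun k _ => integral_comp_of_measurePreserving (hθ.iterate k) hb.1]
    simp [hn', integralFiberSup]
  rw [← hI]
  refine integralFiberSup_le hE hne (birkhoffAverage_mem_boundedMeasurable hS hf n)
    (integrable_of_mem_boundedMeasurable
      (birkhoffAverage_mem_boundedMeasurable hθ.measurable hb n)) ?_
  filter_upwards [ae_iterate_skew_mem hθ hT] with ω hω x hx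
  refine mul_le_mul_of_nonneg_left (Finset.sum_le_sum fun k _ => ?_) (by positivity)
  have := hω x hx k
  rw [iterate_skew] at this ⊢
  exact le_fiberSup hC this

lemma upperIntegral_comp_fst_le (hE : MeasurableSet E) (hne : ∀ ω, (fiber E ω).Nonempty)
    (hθ : MeasurePreserving θ P P) (hS : Measurable (skew T θ))
    (hT : ∀ᵐ ω ∂P, MapsTo (T ω) (fiber E ω) (fiber E (θ ω))) {g : Ω → ℝ}
    (hg : g ∈ boundedMeasurable Ω) :
    upperIntegral P T θ E (g ∘ Prod.fst) ≤ ∫ ω, g ω ∂P :=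
  have hg' := comp_mem_boundedMeasurable hg (measurable_fst (β := X))
  (upperIntegral_le_integralFiberSup hE hne hθ hS hT hg').trans
    (integralFiberSup_le hE hne hg' (integrable_of_mem_boundedMeasurable hg)
      (Eventually.of_forall fun _ _ _ => le_rfl))

lemma upperIntegral_nonpos (hE : MeasurableSet E) (hne : ∀ ω, (fiber E ω).Nonempty)
    (hθ : MeasurePreserving θ P P) (hS : Measurable (skew T θ))
    (hT : ∀ᵐ ω ∂P, MapsTo (T ω) (fiber E ω) (fiber E (θ ω)))
    (hf : f ∈ boundedMeasurable (Ω × X)) (h : ∀ z ∈ E, f z ≤ 0) :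
    upperIntegral P T θ E f ≤ 0 := by
  refine (upperIntegral_le_integralFiberSup hE hne hθ hS hT hf).trans ?_
  simpa using integralFiberSup_le (P := P) hE hne hf (integrable_const 0)
    (Eventually.of_forall fun _ _ hx => h _ hx)

lemma upperIntegral_comp_skew_sub_le (hE : MeasurableSet E) (hne : ∀ ω, (fiber E ω).Nonempty)
    (hS : Measurable (skew T θ)) (hf : f ∈ boundedMeasurable (Ω × X)) :
    upperIntegral P T θ E (f ∘ skew T θ - f) ≤ 0 := by
  obtain ⟨C, hC⟩ := hf.2
  have hf' := sub_mem (comp_mem_boundedMeasurable hf hS) hf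
  have hv : Tendsto (fun n : ℕ => (n : ℝ)⁻¹ * (2 * C)) atTop (𝓝 0) := by
    simpa using (tendsto_inv_atTop_nhds_zero_nat (𝕜 := ℝ)).mul_const (2 * C)
  refine upperIntegral_le hne hf'.2 hv (Eventually.of_forall fun n => ?_)
  have := integralFiberSup_le (P := P) hE hne (birkhoffAverage_mem_boundedMeasurable hS hf' n)
    (integrable_const ((n : ℝ)⁻¹ * (2 * C))) (Eventually.of_forall fun ω x _ => ?_)
  · simpa using this
  have hsum : birkhoffSum (skew T θ) (f ∘ skew T θ - f) n (ω, x) =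
      f ((skew T θ)^[n] (ω, x)) - f (ω, x) := by
    rw [← birkhoffSum_apply_sub_birkhoffSum, birkhoffSum_sub]
    congr 1
    refine Finset.sum_congr rfl fun k _ => ?_
    rw [Function.comp_apply, ← Function.iterate_succ_apply' (skew T θ), Function.iterate_succ_apply]
  rw [birkhoffAverage, hsum, smul_eq_mul]
  refine mul_le_mul_of_nonneg_left ?_ (by positivity)
  linarith [(abs_le.1 (hC ((skew T θ)^[n] (ω, x)))).2, (abs_le.1 (hC (ω, x))).1]

end LimitFunctional

section OrbitCapacity

variable {Ω X : Type*} {T : Ω → X → X} {θ : Ω → Ω} {E : Set (Ω × X)}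

lemma orbCount_eq_birkhoffSum (A : Set X) (n : ℕ) (ω : Ω) (x : X) :
    (orbCount T θ A n ω x : ℝ) =
      birkhoffSum (skew T θ) ((univ ×ˢ A).indicator 1) n (ω, x) := by
  classical
  rw [orbCount, Nat.card_eq_fintype_card, Fintype.card_subtype, Finset.natCast_card_filter,
    birkhoffSum, Fin.sum_univ_eq_sum_range fun i => if itr T θ i ω x ∈ A then (1 : ℝ) else 0]
  refine Finset.sum_congr rfl fun i _ => ?_
  simp [iterate_skew, indicator_apply]

lemma abs_indicator_one_le {Z : Type*} (A : Set Z) (z : Z) : |A.indicator (1 : Z → ℝ) z| ≤ 1 := by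
  by_cases hz : z ∈ A <;> simp [hz]

lemma indicator_one_mem_Icc {Z : Type*} (A : Set Z) (z : Z) :
    A.indicator (1 : Z → ℝ) z ∈ Icc (0 : ℝ) 1 := by
  by_cases hz : z ∈ A <;> simp [hz]

lemma bsup_div_eq_fiberSup (hne : ∀ ω, (fiber E ω).Nonempty) (A : Set X) (n : ℕ) (ω : Ω) :
    (bsup T θ E A n ω : ℝ) / n =
      fiberSup E (birkhoffAverage ℝ (skew T θ) ((univ ×ˢ A).indicator 1) n) ω := by
  have havg : ∀ x, birkhoffAverage ℝ (skew T θ) ((univ ×ˢ A).indicator 1) n (ω, x) =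
      (orbCount T θ A n ω x : ℝ) / n := fun x => by
    rw [orbCount_eq_birkhoffSum, birkhoffAverage, smul_eq_mul, inv_mul_eq_div]
  have hbdd : BddAbove {m | ∃ x ∈ fiber E ω, m = orbCount T θ A n ω x} := by
    refine ⟨n, ?_⟩
    rintro _ ⟨x, -, rfl⟩
    simpa [orbCount] using Finite.card_subtype_le fun i : Fin n => itr T θ (i : ℕ) ω x ∈ A
  refine le_antisymm ?_ (fiberSup_le hne fun x hx => ?_)
  · obtain ⟨x, hx, h⟩ := Nat.sSup_mem (let ⟨x, hx⟩ := hne ω; ⟨_, x, hx, rfl⟩ :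
      {m | ∃ x ∈ fiber E ω, m = orbCount T θ A n ω x}.Nonempty) hbdd
    rw [bsup, h, ← havg]
    exact le_fiberSup (abs_birkhoffAverage_le (abs_indicator_one_le _) n) hx
  · rw [havg]
    gcongr
    exact le_csSup hbdd ⟨x, hx, rfl⟩

lemma ocap_eq_limsup_fiberSup (hne : ∀ ω, (fiber E ω).Nonempty) (A : Set X) (ω : Ω) :
    ocap T θ E A ω = limsup (fun n =>
      fiberSup E (birkhoffAverage ℝ (skew T θ) ((univ ×ˢ A).indicator 1) n) ω) atTop := by
  simp only [ocap, bsup_div_eq_fiberSup hne]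

/-- Comparison of a Birkhoff sum with the Birkhoff sum of Birkhoff averages. -/
lemma birkhoffSum_le_birkhoffSum_birkhoffAverage {Z : Type*} {S : Z → Z} {f : Z → ℝ}
    (hf : ∀ z, f z ∈ Icc (0 : ℝ) 1) {m : ℕ} (hm : 1 ≤ m) (n : ℕ) (z : Z) :
    birkhoffSum S f n z ≤ birkhoffSum S (birkhoffAverage ℝ S f m) n z + m := by
  have hshift : ∀ j, birkhoffSum S f n z - j ≤ birkhoffSum S f n (S^[j] z) := by
    intro j
    have h1 := birkhoffSum_add S f j n z
    have h2 := birkhoffSum_add S f n j z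
    have h3 : 0 ≤ birkhoffSum S f j (S^[n] z) := Finset.sum_nonneg fun _ _ => (hf _).1
    have h4 : birkhoffSum S f j z ≤ j := by
      simpa [birkhoffSum] using Finset.sum_le_card_nsmul (Finset.range j) (fun k => f (S^[k] z)) 1
        fun k _ => (hf _).2
    rw [add_comm n j] at h2
    linarith
  have hswap : ∑ j ∈ Finset.range m, birkhoffSum S f n (S^[j] z) =
      m * birkhoffSum S (birkhoffAverage ℝ S f m) n z := by
    simp only [birkhoffSum, birkhoffAverage, smul_eq_mul, ← Finset.mul_sum]
    rw [mul_inv_cancel_left₀ (by positivity), Finset.sum_comm]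
    refine Finset.sum_congr rfl fun i _ => Finset.sum_congr rfl fun j _ => ?_
    rw [← Function.iterate_add_apply, add_comm, Function.iterate_add_apply]
  have hle : (m : ℝ) * (birkhoffSum S f n z - m) ≤
      m * birkhoffSum S (birkhoffAverage ℝ S f m) n z := by
    rw [← hswap]
    have := Finset.card_nsmul_le_sum (Finset.range m) (fun j => birkhoffSum S f n (S^[j] z))
      (birkhoffSum S f n z - m) fun j hj => le_trans
        (sub_le_sub_left (by exact_mod_cast (Finset.mem_range.1 hj).le) _) (hshift j)
    simpa using this
  linarith [le_of_mul_le_mul_left hle (by positivity)]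

lemma fiberSup_mem_Icc {f : Ω × X → ℝ} (hne : ∀ ω, (fiber E ω).Nonempty)
    (hf : ∀ z, f z ∈ Icc (0 : ℝ) 1) (ω : Ω) :
    fiberSup E f ω ∈ Icc (0 : ℝ) 1 := by
  obtain ⟨x, hx⟩ := hne ω
  exact ⟨(hf _).1.trans (le_fiberSup (C := 1) (fun z => abs_le.2
    ⟨by linarith [(hf z).1], (hf z).2⟩) hx), fiberSup_le hne fun x _ => (hf _).2⟩

lemma limsup_mem_Icc {u : ℕ → ℝ} (hu : ∀ n, u n ∈ Icc (0 : ℝ) 1) :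
    limsup u atTop ∈ Icc (0 : ℝ) 1 :=
  ⟨le_limsup_of_frequently_le (Frequently.of_forall fun n => (hu n).1)
      (isBoundedUnder_of ⟨1, fun n => (hu n).2⟩),
    limsup_le_of_le (isBoundedUnder_of ⟨0, fun n => (hu n).1⟩ :
      IsBoundedUnder (· ≥ ·) atTop u).isCoboundedUnder_le (Eventually.of_forall fun n => (hu n).2)⟩

lemma integrable_of_mem_Icc [MeasurableSpace Ω] {P : Measure Ω} [IsProbabilityMeasure P]
    {f : Ω → ℝ} (hf : Measurable f) (h : ∀ ω, f ω ∈ Icc (0 : ℝ) 1) :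
    Integrable f P :=
  integrable_of_mem_boundedMeasurable ⟨hf, 1, fun ω => abs_le.2
    ⟨by linarith [(h ω).1], (h ω).2⟩⟩

variable [MeasurableSpace Ω] [MeasurableSpace X] [StandardBorelSpace X] {P : Measure Ω}
  [IsProbabilityMeasure P] [P.IsComplete] {f : Ω × X → ℝ}

lemma measurable_limsup_fiberSup (P : Measure Ω) [IsFiniteMeasure P] [P.IsComplete]
    (hE : MeasurableSet E) (hne : ∀ ω, (fiber E ω).Nonempty)
    (hS : Measurable (skew T θ)) (hf : f ∈ boundedMeasurable (Ω × X)) :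
    Measurable fun ω =>
      limsup (fun n => fiberSup E (birkhoffAverage ℝ (skew T θ) f n) ω) atTop :=
  Measurable.limsup fun n => (fiberSup_mem_boundedMeasurable P hE hne
    (birkhoffAverage_mem_boundedMeasurable hS hf n)).1

/-- The integral of the upper limit of fiberwise suprema is bounded by the upper integral. -/
lemma integral_limsup_fiberSup_le (hE : MeasurableSet E) (hne : ∀ ω, (fiber E ω).Nonempty)
    (hθ : MeasurePreserving θ P P) (hS : Measurable (skew T θ))
    (hT : ∀ᵐ ω ∂P, MapsTo (T ω) (fiber E ω) (fiber E (θ ω)))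
    (hfm : Measurable f) (hf : ∀ z, f z ∈ Icc (0 : ℝ) 1) :
    ∫ ω, limsup (fun n => fiberSup E (birkhoffAverage ℝ (skew T θ) f n) ω) atTop ∂P ≤
      upperIntegral P T θ E f := by
  have habs : ∀ z, |f z| ≤ 1 := fun z => abs_le.2 ⟨by linarith [(hf z).1], (hf z).2⟩
  have hfb : f ∈ boundedMeasurable (Ω × X) := ⟨hfm, 1, habs⟩
  refine le_upperIntegral hne hfb.2 ?_
  filter_upwards [eventually_ge_atTop 1] with m hm
  set g := fiberSup E (birkhoffAverage ℝ (skew T θ) f m) with hg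
  have hA : ∀ n z, birkhoffAverage ℝ (skew T θ) f n z ∈ Icc (0 : ℝ) 1 :=
    birkhoffAverage_mem_Icc le_rfl zero_le_one hf
  have hg01 : ∀ ω, g ω ∈ Icc (0 : ℝ) 1 := fiberSup_mem_Icc hne (hA m)
  have hgb := fiberSup_mem_boundedMeasurable P hE hne
    (birkhoffAverage_mem_boundedMeasurable hS hfb m)
  refine le_trans (integral_mono_ae (integrable_of_mem_Icc
    (measurable_limsup_fiberSup P hE hne hS hfb)
    fun ω => limsup_mem_Icc fun n => fiberSup_mem_Icc hne (hA n) ω)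
    (integrable_of_mem_Icc (Measurable.limsup fun n =>
      measurable_birkhoffAverage hθ.measurable hgb.1 n) fun ω => limsup_mem_Icc fun n =>
      birkhoffAverage_mem_Icc le_rfl zero_le_one hg01 n ω) ?_)
    (integral_limsup_birkhoffAverage_le hθ hgb.1 hg01)
  filter_upwards [ae_iterate_skew_mem hθ hT] with ω hω
  have hle : ∀ n : ℕ, 1 ≤ n → fiberSup E (birkhoffAverage ℝ (skew T θ) f n) ω ≤
      birkhoffAverage ℝ θ g n ω + (n : ℝ)⁻¹ * m := by
    intro n hn
    refine fiberSup_le hne fun x hx => ?_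
    rw [birkhoffAverage, birkhoffAverage, smul_eq_mul, smul_eq_mul, ← mul_add]
    refine mul_le_mul_of_nonneg_left ((birkhoffSum_le_birkhoffSum_birkhoffAverage hf hm n _).trans
      (add_le_add_left (Finset.sum_le_sum fun k _ => ?_) _)) (by positivity)
    have := hω x hx k
    rw [iterate_skew] at this ⊢
    exact le_fiberSup (abs_birkhoffAverage_le habs m) this
  have hlim : Tendsto (fun n : ℕ => (n : ℝ)⁻¹ * m) atTop (𝓝 0) := by
    simpa using (tendsto_inv_atTop_nhds_zero_nat (𝕜 := ℝ)).mul_const (m : ℝ)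
  have hga : ∀ n, birkhoffAverage ℝ θ g n ω ∈ Icc (0 : ℝ) 1 := fun n =>
    birkhoffAverage_mem_Icc le_rfl zero_le_one hg01 n ω
  refine le_trans (limsup_le_limsup ((eventually_ge_atTop 1).mono hle) (isBoundedUnder_of
    ⟨0, fun n => (fiberSup_mem_Icc hne (hA n) ω).1⟩ : IsBoundedUnder (· ≥ ·) atTop _
    ).isCoboundedUnder_le (isBoundedUnder_le_add (isBoundedUnder_of ⟨1, fun n => (hga n).2⟩)
    hlim.isBoundedUnder_le)) (limsup_le_of_tendsto_sub (C := 1)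
    (u := fun n => birkhoffAverage ℝ θ g n ω) (fun n => abs_le.2
    ⟨by linarith [(hga n).1], (hga n).2⟩) (by simpa only [add_sub_cancel_left] using hlim))

/-- Every invariant measure is bounded by the integrated upper limit of fiberwise suprema. -/
lemma lintegral_le_lintegral_limsup_fiberSup (hE : MeasurableSet E)
    (hne : ∀ ω, (fiber E ω).Nonempty) {μ : Measure (Ω × X)} [IsProbabilityMeasure μ]
    (hS : MeasurePreserving (skew T θ) μ μ) (hμP : μ.map Prod.fst = P) (hμE : μ E = 1)
    (hfm : Measurable f) (hf : ∀ z, f z ∈ Icc (0 : ℝ) 1) :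
    ∫⁻ z, ENNReal.ofReal (f z) ∂μ ≤ ∫⁻ ω, ENNReal.ofReal
      (limsup (fun n => fiberSup E (birkhoffAverage ℝ (skew T θ) f n) ω) atTop) ∂P := by
  have habs : ∀ z, |f z| ≤ 1 := fun z => abs_le.2 ⟨by linarith [(hf z).1], (hf z).2⟩
  have hfb : f ∈ boundedMeasurable (Ω × X) := ⟨hfm, 1, habs⟩
  have hA : ∀ n z, birkhoffAverage ℝ (skew T θ) f n z ∈ Icc (0 : ℝ) 1 :=
    birkhoffAverage_mem_Icc le_rfl zero_le_one hf
  have hsm : ∀ n, Measurable (fiberSup E (birkhoffAverage ℝ (skew T θ) f n)) := fun n =>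
    (fiberSup_mem_boundedMeasurable P hE hne (birkhoffAverage_mem_boundedMeasurable
      hS.measurable hfb n)).1
  have hE' : ∀ᵐ z ∂μ, z ∈ E := (prob_compl_eq_zero_iff hE).2 hμE
  have hstep : ∀ n : ℕ, 1 ≤ n → ∫⁻ z, ENNReal.ofReal (f z) ∂μ ≤
      ∫⁻ ω, ENNReal.ofReal (fiberSup E (birkhoffAverage ℝ (skew T θ) f n) ω) ∂P := by
    intro n hn
    have hn' : (n : ℝ) ≠ 0 := by positivity
    have hint (k : ℕ) : Integrable (fun z => f ((skew T θ)^[k] z)) μ :=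
      integrable_of_mem_boundedMeasurable
        (comp_mem_boundedMeasurable hfb (hS.measurable.iterate k))
    have hI : ∫ z, birkhoffAverage ℝ (skew T θ) f n z ∂μ = ∫ z, f z ∂μ := by
      simp only [birkhoffAverage, birkhoffSum, smul_eq_mul]
      rw [integral_const_mul, integral_finsetSum _ fun k _ => hint k,
        Finset.sum_congr rfl fun k _ => integral_comp_of_measurePreserving (hS.iterate k) hfm]
      simp [hn']
    rw [← ofReal_integral_eq_lintegral_ofReal (integrable_of_mem_boundedMeasurable hfb)
      (Eventually.of_forall fun z => (hf z).1), ← hI, ofReal_integral_eq_lintegral_ofReal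
      (integrable_of_mem_boundedMeasurable (birkhoffAverage_mem_boundedMeasurable
        hS.measurable hfb n)) (Eventually.of_forall fun z => (hA n z).1), ← hμP,
      lintegral_map (hsm n).ennreal_ofReal measurable_fst]
    refine lintegral_mono_ae (hE'.mono fun z hz => ENNReal.ofReal_le_ofReal ?_)
    exact le_fiberSup (x := z.2) (abs_birkhoffAverage_le habs n) hz
  have hlim : ∀ ω, ENNReal.ofReal
      (limsup (fun n => fiberSup E (birkhoffAverage ℝ (skew T θ) f n) ω) atTop) =
      limsup (fun n => ENNReal.ofReal (fiberSup E (birkhoffAverage ℝ (skew T θ) f n) ω)) atTop :=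
    fun ω => ENNReal.ofReal_mono.map_limsup_of_continuousAt _
      ENNReal.continuous_ofReal.continuousAt
      (isBoundedUnder_of ⟨1, fun n => (fiberSup_mem_Icc hne (hA n) ω).2⟩)
      (isBoundedUnder_of ⟨0, fun n => (fiberSup_mem_Icc hne (hA n) ω).1⟩ :
        IsBoundedUnder (· ≥ ·) atTop _).isCoboundedUnder_le
  simp only [hlim]
  refine le_trans ?_ (limsup_lintegral_le (fun _ => 1) (fun n => (hsm n).ennreal_ofReal)
    (fun n => Eventually.of_forall fun ω =>
      ENNReal.ofReal_le_one.2 (fiberSup_mem_Icc hne (hA n) ω).2) (by simp))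
  exact le_limsup_of_frequently_le ((eventually_ge_atTop 1).mono hstep).frequently

end OrbitCapacity

section InvariantFunctional

open scoped NNReal BoundedContinuousFunction

/-- Hahn–Banach: a sublinear functional is attained at any given point by a linear functional below
it. -/
lemma exists_linearMap_le_sublinear {V : Type*} [AddCommGroup V] [Module ℝ V] (N : V → ℝ)
    (hsmul : ∀ c : ℝ, 0 < c → ∀ x, N (c • x) = c * N x) (hadd : ∀ x y, N (x + y) ≤ N x + N y)
    (x : V) : ∃ l : V →ₗ[ℝ] ℝ, l x = N x ∧ ∀ y, l y ≤ N y := by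
  have h0 : N 0 = 0 := by
    have := hsmul 2 two_pos 0
    rw [smul_zero] at this
    linarith
  rcases eq_or_ne x 0 with rfl | hx
  · obtain ⟨l, -, hl⟩ := exists_extension_of_le_sublinear (⊥ : V →ₗ.[ℝ] ℝ) N hsmul hadd fun y => by
      have hy : (y : V) = 0 := y.2
      have hy' : y = 0 := Subtype.ext hy
      rw [hy', LinearPMap.map_zero]
      exact h0.ge
    exact ⟨l, by rw [map_zero, h0], hl⟩
  obtain ⟨l, hl, hl'⟩ := exists_extension_of_le_sublinear
    (LinearPMap.mkSpanSingleton x (N x) hx : V →ₗ.[ℝ] ℝ) N hsmul hadd fun y => by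
      obtain ⟨y, hy⟩ := y
      obtain ⟨c, rfl⟩ := Submodule.mem_span_singleton.1 hy
      rw [LinearPMap.mkSpanSingleton'_apply, RingHom.id_apply, smul_eq_mul]
      rcases lt_trichotomy c 0 with hc | rfl | hc
      · have h1 := hadd (c • x) ((-c) • x)
        rw [← add_smul, add_neg_cancel, zero_smul, h0, hsmul (-c) (by linarith)] at h1
        linarith
      · simp [h0]
      · exact (hsmul c hc x).ge
  exact ⟨l, (hl ⟨x, Submodule.mem_span_singleton_self x⟩).trans
    (LinearPMap.mkSpanSingleton_apply ℝ ℝ hx (N x)), hl'⟩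

lemma exists_linearMap_le_sublinearOn {V : Type*} [AddCommGroup V] [Module ℝ V]
    {W : Submodule ℝ V} (N : V → ℝ) (hsmul : ∀ c : ℝ, 0 < c → ∀ x ∈ W, N (c • x) = c * N x)
    (hadd : ∀ x ∈ W, ∀ y ∈ W, N (x + y) ≤ N x + N y) {x : V} (hx : x ∈ W) :
    ∃ l : V →ₗ[ℝ] ℝ, l x = N x ∧ ∀ y ∈ W, l y ≤ N y := by
  obtain ⟨l, hl, hl'⟩ := exists_linearMap_le_sublinear (fun y : W => N y)
    (fun c hc y => hsmul c hc y y.2) (fun y z => hadd y y.2 z z.2) ⟨x, hx⟩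
  obtain ⟨L, hL⟩ := LinearMap.exists_extend l
  have hL' (y : W) : L y = l y := LinearMap.congr_fun hL y
  exact ⟨L, (hL' ⟨x, hx⟩).trans hl, fun y hy => (hL' ⟨y, hy⟩).trans_le (hl' ⟨y, hy⟩)⟩

/-- The tensor product of the indicator function of `A` with `h`. -/
noncomputable def indicatorMul {Ω X : Type*} (A : Set Ω) (h : X → ℝ) (p : Ω × X) : ℝ :=
  A.indicator 1 p.1 * h p.2

lemma indicatorMul_nonneg {Ω X : Type*} (A : Set Ω) {h : X → ℝ} (hh : ∀ x, 0 ≤ h x) :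
    0 ≤ indicatorMul A h :=
  fun p => mul_nonneg (indicator_one_mem_Icc A p.1).1 (hh p.2)

lemma abs_coe_le_dist_zero {X : Type*} [TopologicalSpace X] (h : X →ᵇ ℝ≥0) (x : X) :
    |(h x : ℝ)| ≤ dist h 0 := by
  simpa [NNReal.dist_eq] using h.dist_coe_le_dist (g := 0) x

variable {Ω X : Type*} [MeasurableSpace Ω] [MeasurableSpace X]

lemma exists_linearMap_le_upperIntegral [StandardBorelSpace X] {P : Measure Ω}
    [IsProbabilityMeasure P] [P.IsComplete] {T : Ω → X → X} {θ : Ω → Ω} {E : Set (Ω × X)}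
    (hE : MeasurableSet E) (hne : ∀ ω, (fiber E ω).Nonempty) (hS : Measurable (skew T θ))
    {f₀ : Ω × X → ℝ} (hf₀ : f₀ ∈ boundedMeasurable (Ω × X)) :
    ∃ l : (Ω × X → ℝ) →ₗ[ℝ] ℝ, l f₀ = upperIntegral P T θ E f₀ ∧
      ∀ f ∈ boundedMeasurable (Ω × X), l f ≤ upperIntegral P T θ E f :=
  exists_linearMap_le_sublinearOn (upperIntegral P T θ E)
    (fun _ hc _ hf => upperIntegral_smul hE hne hS hf hc)
    (fun _ hf _ hg => upperIntegral_add_le hE hne hS hf hg) hf₀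

/-- Bounded measurable functions that are continuous on almost every fiber of `E`. -/
def fiberContinuous [TopologicalSpace X] (P : Measure Ω) (E : Set (Ω × X)) :
    Submodule ℝ (Ω × X → ℝ) where
  carrier := {f | f ∈ boundedMeasurable (Ω × X) ∧
    ∀ᵐ ω ∂P, ContinuousOn (fun x => f (ω, x)) (fiber E ω)}
  zero_mem' := ⟨zero_mem _, Eventually.of_forall fun _ => continuousOn_const⟩
  add_mem' := fun hf hg => ⟨add_mem hf.1 hg.1, by
    filter_upwards [hf.2, hg.2] with ω h h' using h.add h'⟩
  smul_mem' := fun c _ hf => ⟨Submodule.smul_mem _ c hf.1, by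
    filter_upwards [hf.2] with ω h using h.const_smul c⟩

section Topological

variable [TopologicalSpace X] {P : Measure Ω} {E : Set (Ω × X)} {f g : Ω × X → ℝ}

lemma sup_mem_fiberContinuous (hf : f ∈ fiberContinuous P E) (hg : g ∈ fiberContinuous P E) :
    f ⊔ g ∈ fiberContinuous P E := by
  obtain ⟨⟨hfm, C, hC⟩, hfc⟩ := hf
  obtain ⟨⟨hgm, D, hD⟩, hgc⟩ := hg
  refine ⟨⟨hfm.sup hgm, max C D, fun z => ?_⟩, ?_⟩
  · exact abs_max_le_max_abs_abs.trans (max_le_max (hC z) (hD z))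
  · filter_upwards [hfc, hgc] with ω h h' using h.sup h'

lemma indicator_one_mem_fiberContinuous (hE : MeasurableSet E) :
    E.indicator (1 : Ω × X → ℝ) ∈ fiberContinuous P E := by
  refine ⟨indicator_one_mem_boundedMeasurable hE, Eventually.of_forall fun ω => ?_⟩
  exact (continuousOn_const (c := (1 : ℝ))).congr fun x hx => by
    simp [show (ω, x) ∈ E from hx]

lemma comp_skew_mem_fiberContinuous {T : Ω → X → X} {θ : Ω → Ω} (hθ : MeasurePreserving θ P P)
    (hS : Measurable (skew T θ))
    (hT : ∀ᵐ ω ∂P, MapsTo (T ω) (fiber E ω) (fiber E (θ ω)))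
    (hTc : ∀ᵐ ω ∂P, ContinuousOn (T ω) (fiber E ω)) (hf : f ∈ fiberContinuous P E) :
    f ∘ skew T θ ∈ fiberContinuous P E := by
  refine ⟨comp_mem_boundedMeasurable hf.1 hS, ?_⟩
  filter_upwards [hT, hTc, hθ.quasiMeasurePreserving.ae hf.2] with ω h h' h''
    using h''.comp h' h

lemma indicatorMul_mem_fiberContinuous [OpensMeasurableSpace X] {A : Set Ω}
    (hA : MeasurableSet A) {h : X → ℝ} (hc : Continuous h) {C : ℝ} (hC : ∀ x, |h x| ≤ C) :
    indicatorMul A h ∈ fiberContinuous P E := by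
  refine ⟨⟨((measurable_one.indicator hA).comp measurable_fst).mul
    (hc.measurable.comp measurable_snd), C, fun p => ?_⟩,
    Eventually.of_forall fun ω => ?_⟩
  · rw [indicatorMul, abs_mul]
    exact (mul_le_of_le_one_left (abs_nonneg _) (abs_indicator_one_le A p.1)).trans (hC _)
  · exact (show Continuous fun x => A.indicator (1 : Ω → ℝ) ω * h x from
      continuous_const.mul hc).continuousOn

lemma indicatorMul_nnreal_mem_fiberContinuous [OpensMeasurableSpace X] {A : Set Ω}
    (hA : MeasurableSet A) (h : X →ᵇ ℝ≥0) :
    indicatorMul A (fun x => (h x : ℝ)) ∈ fiberContinuous P E :=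
  indicatorMul_mem_fiberContinuous hA (NNReal.continuous_coe.comp h.continuous)
    (abs_coe_le_dist_zero h)

/-- Finite measures on `Ω × X` are determined by the integrals of the products of indicator
functions on `Ω` and bounded continuous functions on `X`. -/
lemma ext_of_integral_indicatorMul_eq [HasOuterApproxClosed X] [BorelSpace X]
    {μ ν : Measure (Ω × X)} [IsFiniteMeasure μ] [IsFiniteMeasure ν]
    (h : ∀ A : Set Ω, MeasurableSet A → ∀ φ : X →ᵇ ℝ≥0,
      ∫ p, indicatorMul A (fun x => (φ x : ℝ)) p ∂μ =
        ∫ p, indicatorMul A (fun x => (φ x : ℝ)) p ∂ν) : μ = ν := by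
  have key : ∀ (ρ : Measure (Ω × X)) [IsFiniteMeasure ρ] (A : Set Ω), MeasurableSet A →
      ∀ φ : X →ᵇ ℝ≥0, ∫⁻ x, φ x ∂((ρ.restrict (Prod.fst ⁻¹' A)).map Prod.snd) =
        ENNReal.ofReal (∫ p, indicatorMul A (fun x => (φ x : ℝ)) p ∂ρ) := by
    intro ρ _ A hA φ
    rw [lintegral_map (show Measurable fun x => (φ x : ℝ≥0∞) from
        measurable_coe_nnreal_ennreal.comp φ.continuous.measurable) measurable_snd,
      ← lintegral_indicator (measurable_fst hA), ofReal_integral_eq_lintegral_ofReal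
      (integrable_of_mem_boundedMeasurable
        (indicatorMul_nnreal_mem_fiberContinuous (P := (0 : Measure Ω)) (E := ∅) hA φ).1)
      (Eventually.of_forall (indicatorMul_nonneg A fun x => (φ x).2))]
    refine lintegral_congr fun p => ?_
    by_cases hp : p.1 ∈ A <;> simp [indicatorMul, hp]
  refine Measure.ext_prod fun {A B} hA hB => ?_
  have := ext_of_forall_lintegral_eq_of_IsFiniteMeasure
    (μ := (μ.restrict (Prod.fst ⁻¹' A)).map Prod.snd)
    (ν := (ν.restrict (Prod.fst ⁻¹' A)).map Prod.snd)
    fun φ => by rw [key μ A hA φ, key ν A hA φ, h A hA φ]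
  have h' := congrArg (fun ρ => ρ B) this
  rw [Set.prod_eq]
  simpa [Measure.map_apply measurable_snd hB, Measure.restrict_apply (measurable_snd hB),
    inter_comm] using h'

end Topological

/-- The product `σ`-algebra is generated by the positivity sets of functions that are continuous on
the fibers. -/
lemma le_generateFrom_fiberContinuous [MetricSpace X] [CompactSpace X] [BorelSpace X]
    (P : Measure Ω) (E : Set (Ω × X)) :
    (Prod.instMeasurableSpace : MeasurableSpace (Ω × X)) ≤ MeasurableSpace.generateFrom
      {S | ∃ f ∈ fiberContinuous P E, 0 ≤ f ∧ S = {z | 0 < f z}} := by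
  refine sup_le ?_ ?_
  · rintro _ ⟨A, hA, rfl⟩
    refine MeasurableSpace.measurableSet_generateFrom ⟨indicatorMul A fun _ => 1,
      indicatorMul_mem_fiberContinuous hA continuous_const (C := 1) (by simp), fun p => ?_, ?_⟩
    · simpa [indicatorMul] using (indicator_one_mem_Icc A p.1).1
    · ext p
      by_cases hp : p.1 ∈ A <;> simp [indicatorMul, hp]
  · refine (@measurable_of_isOpen _ _ _ _ _ (MeasurableSpace.generateFrom _) _
      fun U hU => MeasurableSpace.measurableSet_generateFrom ?_).comap_le
    rcases Uᶜ.eq_empty_or_nonempty with hU' | hU'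
    · refine ⟨indicatorMul univ fun _ => 1, indicatorMul_mem_fiberContinuous MeasurableSet.univ
        continuous_const (C := 1) (by simp), fun p => by simp [indicatorMul], ?_⟩
      simp [compl_empty_iff.1 hU', indicatorMul]
    · have hc : Continuous fun x => Metric.infDist x Uᶜ := Metric.continuous_infDist_pt _
      obtain ⟨C, hC⟩ := isCompact_univ.exists_bound_of_continuousOn hc.continuousOn
      refine ⟨indicatorMul univ fun x => Metric.infDist x Uᶜ, indicatorMul_mem_fiberContinuous
        MeasurableSet.univ hc fun x => hC x (mem_univ x), fun p => ?_, ?_⟩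
      · simpa [indicatorMul] using Metric.infDist_nonneg
      · ext p
        simp [indicatorMul, ← (IsOpen.isClosed_compl hU).notMem_iff_infDist_pos hU']

/-- A monotone sequence of fiberwise continuous functions decreasing to zero has fiberwise suprema
whose integrals tend to zero. -/
lemma tendsto_integralFiberSup_zero [TopologicalSpace X] [StandardBorelSpace X] {P : Measure Ω}
    [IsProbabilityMeasure P] [P.IsComplete] {E : Set (Ω × X)} (hE : MeasurableSet E)
    (hne : ∀ ω, (fiber E ω).Nonempty) (hEcp : ∀ ω, IsCompact (fiber E ω))
    {f : ℕ → Ω × X → ℝ} (hf : ∀ n, f n ∈ fiberContinuous P E) (hanti : Antitone f)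
    (hlim : ∀ z, Tendsto (fun n => f n z) atTop (𝓝 0)) :
    Tendsto (fun n => integralFiberSup P E (f n)) atTop (𝓝 0) := by
  have hnn : ∀ n z, 0 ≤ f n z := fun n z =>
    (show Antitone fun n => f n z from fun _ _ h => hanti h z).le_of_tendsto (hlim z) n
  obtain ⟨C, hC⟩ := (hf 0).1.2
  have hb : ∀ n z, |f n z| ≤ C := fun n z => by
    rw [abs_of_nonneg (hnn n z)]
    exact (hanti (Nat.zero_le n) z).trans ((le_abs_self _).trans (hC z))
  have h0 : ∫ _ : Ω, (0 : ℝ) ∂P = 0 := by simp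
  unfold integralFiberSup
  rw [← h0]
  refine tendsto_integral_of_dominated_convergence (fun _ => C)
    (fun n => (fiberSup_mem_boundedMeasurable P hE hne (hf n).1).1.aestronglyMeasurable)
    (integrable_const C) (fun n => Eventually.of_forall (abs_fiberSup_le hne (hb n))) ?_
  filter_upwards [ae_all_iff.2 fun n => (hf n).2] with ω hω
  have huni : TendstoUniformlyOn (fun n x => f n (ω, x)) (fun _ => 0) atTop (fiber E ω) :=
    Antitone.tendstoUniformlyOn_of_forall_tendsto (hEcp ω) hω
      (fun x _ _ _ h => hanti h (ω, x)) continuousOn_const fun x _ => hlim (ω, x)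
  rw [Metric.tendstoUniformlyOn_iff] at huni
  rw [Metric.tendsto_atTop']
  intro ε hε
  obtain ⟨N, hN⟩ := eventually_atTop.1 (huni (ε / 2) (half_pos hε))
  refine ⟨N, fun n hn => ?_⟩
  have h1 : fiberSup E (f n) ω ≤ ε / 2 := fiberSup_le hne fun x hx => by
    have := hN n hn.le x hx
    rw [dist_comm, Real.dist_eq, sub_zero] at this
    exact (le_abs_self _).trans this.le
  have h2 : 0 ≤ fiberSup E (f n) ω := by
    obtain ⟨x, hx⟩ := hne ω
    exact (hnn n _).trans (le_fiberSup (hb n) hx)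
  rw [Real.dist_eq, sub_zero, abs_of_nonneg h2]
  linarith

end InvariantFunctional

section InvariantMeasure

open scoped NNReal BoundedContinuousFunction

variable {Ω X : Type*} [MeasurableSpace Ω] [MetricSpace X] [CompactSpace X] [MeasurableSpace X]
  [BorelSpace X] {P : Measure Ω} [IsProbabilityMeasure P] [P.IsComplete] {T : Ω → X → X}
  {θ : Ω → Ω} {E : Set (Ω × X)}

/-- Linear functionals below the upper integral are represented by invariant measures. -/
lemma exists_invariant_measure_of_le_upperIntegral (hE : MeasurableSet E)
    (hne : ∀ ω, (fiber E ω).Nonempty) (hEcp : ∀ ω, IsCompact (fiber E ω))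
    (hθ : MeasurePreserving θ P P) (hS : Measurable (skew T θ))
    (hT : ∀ᵐ ω ∂P, MapsTo (T ω) (fiber E ω) (fiber E (θ ω)))
    (hTc : ∀ᵐ ω ∂P, ContinuousOn (T ω) (fiber E ω)) {l : (Ω × X → ℝ) →ₗ[ℝ] ℝ}
    (hl : ∀ f ∈ boundedMeasurable (Ω × X), l f ≤ upperIntegral P T θ E f) :
    ∃ μ : Measure (Ω × X), IsProbabilityMeasure μ ∧ μ.map Prod.fst = P ∧ μ E = 1 ∧
      MeasurePreserving (skew T θ) μ μ ∧
      ∀ f ∈ fiberContinuous P E, 0 ≤ f → ∫ z, f z ∂μ = l f := by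
  have hnn {f : Ω × X → ℝ} (hf : f ∈ boundedMeasurable (Ω × X)) (h : ∀ z ∈ E, 0 ≤ f z) :
      0 ≤ l f := by
    have h1 := (hl _ (neg_mem hf)).trans (upperIntegral_nonpos hE hne hθ hS hT (neg_mem hf)
      fun z hz => neg_nonpos.2 (h z hz))
    rw [map_neg] at h1
    linarith
  have hfst {g : Ω → ℝ} (hg : g ∈ boundedMeasurable Ω) : l (g ∘ Prod.fst) = ∫ ω, g ω ∂P := by
    refine le_antisymm ((hl _ (comp_mem_boundedMeasurable hg measurable_fst)).trans
      (upperIntegral_comp_fst_le hE hne hθ hS hT hg)) ?_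
    have h1 := (hl _ (comp_mem_boundedMeasurable (neg_mem hg) measurable_fst)).trans
      (upperIntegral_comp_fst_le hE hne hθ hS hT (neg_mem hg))
    rw [show (-g) ∘ Prod.fst = -(g ∘ (Prod.fst : Ω × X → Ω)) from rfl, map_neg] at h1
    simp only [Pi.neg_apply, integral_neg] at h1
    linarith
  have hinv {f : Ω × X → ℝ} (hf : f ∈ boundedMeasurable (Ω × X)) : l (f ∘ skew T θ) = l f := by
    have h1 {f : Ω × X → ℝ} (hf : f ∈ boundedMeasurable (Ω × X)) : l (f ∘ skew T θ) ≤ l f := by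
      have h2 := (hl _ (sub_mem (comp_mem_boundedMeasurable hf hS) hf)).trans
        (upperIntegral_comp_skew_sub_le hE hne hS hf)
      rw [map_sub] at h2
      linarith
    refine le_antisymm (h1 hf) ?_
    have h2 := h1 (neg_mem hf)
    rw [show (-f) ∘ skew T θ = -(f ∘ skew T θ) from rfl, map_neg, map_neg] at h2
    linarith
  have hA {A : Set Ω} (hA : MeasurableSet A) :
      (Prod.fst ⁻¹' A).indicator (1 : Ω × X → ℝ) ∈ fiberContinuous P E := by
    refine ⟨indicator_one_mem_boundedMeasurable (measurable_fst hA),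
      Eventually.of_forall fun ω => ?_⟩
    exact continuousOn_const (c := A.indicator (1 : Ω → ℝ) ω)
  have h1 : (1 : Ω × X → ℝ) ∈ fiberContinuous P E := by simpa using hA MeasurableSet.univ
  obtain ⟨μ, hfin, hμ⟩ := exists_measure_of_daniell (L := fiberContinuous P E)
    (fun f hf g hg => sup_mem_fiberContinuous hf hg) h1 (fun f hf => hf.1.1)
    (fun f hf => hf.1.2.imp fun C hC z => (le_abs_self _).trans (hC z))
    (le_generateFrom_fiberContinuous P E) l (fun f hf h => hnn hf.1 fun z _ => h z)
    fun f hf hanti hlim => by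
      refine squeeze_zero (fun n => hnn (hf n).1 fun z _ => ?_) (fun n => (hl _ (hf n).1).trans
        (upperIntegral_le_integralFiberSup hE hne hθ hS hT (hf n).1))
        (tendsto_integralFiberSup_zero hE hne hEcp hf hanti hlim)
      exact (show Antitone fun n => f n z from fun _ _ h => hanti h z).le_of_tendsto (hlim z) n
  have hind {S : Set (Ω × X)} (hSm : MeasurableSet S)
      (hSL : S.indicator (1 : Ω × X → ℝ) ∈ fiberContinuous P E) :
      μ.real S = l (S.indicator 1) := by
    rw [← hμ _ hSL fun z => (indicator_one_mem_Icc S z).1, integral_indicator_one hSm]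
  have hmap : μ.map Prod.fst = P := by
    refine Measure.ext fun A hAm => ?_
    rw [Measure.map_apply measurable_fst hAm, ← measureReal_eq_measureReal_iff,
      hind (measurable_fst hAm) (hA hAm),
      show (Prod.fst ⁻¹' A).indicator (1 : Ω × X → ℝ) = A.indicator 1 ∘ Prod.fst from rfl,
      hfst (indicator_one_mem_boundedMeasurable hAm), integral_indicator_one hAm]
  have hprob : IsProbabilityMeasure μ := by
    have : IsProbabilityMeasure (μ.map Prod.fst) := hmap ▸ inferInstance
    exact Measure.isProbabilityMeasure_of_map Prod.fst
  have hEL := indicator_one_mem_fiberContinuous (P := P) hE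
  refine ⟨μ, hprob, hmap, ?_, ⟨hS, ?_⟩, hμ⟩
  · have h2 : 0 ≤ l (E.indicator 1 - 1) :=
      hnn (sub_mem hEL h1).1 fun z hz => by simp [hz]
    rw [map_sub, ← hind hE hEL, ← hμ 1 h1 zero_le_one] at h2
    have h3 : μ.real E = 1 := le_antisymm measureReal_le_one (by simpa using h2)
    rw [← ofReal_measureReal, h3, ENNReal.ofReal_one]
  · have := Measure.isProbabilityMeasure_map (μ := μ) hS.aemeasurable
    refine ext_of_integral_indicatorMul_eq fun A hAm φ => ?_
    have hL := indicatorMul_nnreal_mem_fiberContinuous (P := P) (E := E) hAm φ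
    have h0 : 0 ≤ indicatorMul A fun x => (φ x : ℝ) := indicatorMul_nonneg A fun x => (φ x).2
    rw [integral_map hS.aemeasurable hL.1.1.aestronglyMeasurable, hμ _ hL h0, ← hinv hL.1]
    exact hμ _ (comp_skew_mem_fiberContinuous hθ hS hT hTc hL) fun z => h0 (skew T θ z)

/-- The upper integral of the indicator function of a closed set is bounded by the measure of that
set for some invariant measure. -/
lemma exists_invariant_measure_upperIntegral_le (hE : MeasurableSet E)
    (hne : ∀ ω, (fiber E ω).Nonempty) (hEcp : ∀ ω, IsCompact (fiber E ω))
    (hθ : MeasurePreserving θ P P) (hS : Measurable (skew T θ))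
    (hT : ∀ᵐ ω ∂P, MapsTo (T ω) (fiber E ω) (fiber E (θ ω)))
    (hTc : ∀ᵐ ω ∂P, ContinuousOn (T ω) (fiber E ω)) {A : Set X} (hA : IsClosed A) :
    ∃ μ : Measure (Ω × X), IsProbabilityMeasure μ ∧ μ.map Prod.fst = P ∧ μ E = 1 ∧
      MeasurePreserving (skew T θ) μ μ ∧
      ENNReal.ofReal (upperIntegral P T θ E ((univ ×ˢ A).indicator 1)) ≤ μ (univ ×ˢ A) := by
  have hAm : MeasurableSet ((univ : Set Ω) ×ˢ A) := MeasurableSet.univ.prod hA.measurableSet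
  have hb := indicator_one_mem_boundedMeasurable hAm
  obtain ⟨l, hl, hl'⟩ := exists_linearMap_le_upperIntegral (P := P) hE hne hS hb
  obtain ⟨μ, hprob, hmap, hμE, hinv, hμ⟩ :=
    exists_invariant_measure_of_le_upperIntegral hE hne hEcp hθ hS hT hTc hl'
  refine ⟨μ, hprob, hmap, hμE, hinv, ?_⟩
  rw [← hl, univ_prod, ← Measure.map_apply measurable_snd hA.measurableSet]
  have := Measure.isProbabilityMeasure_map (μ := μ) measurable_snd.aemeasurable
  refine ge_of_tendsto' (HasOuterApproxClosed.tendsto_lintegral_apprSeq hA (μ.map Prod.snd))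
    fun n => ?_
  let φ := hA.apprSeq n
  have hL := indicatorMul_nnreal_mem_fiberContinuous (P := P) (E := E) MeasurableSet.univ φ
  have h0 : 0 ≤ indicatorMul (univ : Set Ω) fun x => (φ x : ℝ) :=
    indicatorMul_nonneg univ fun x => (φ x).2
  have h1 : l ((Prod.snd ⁻¹' A).indicator 1) ≤ l (indicatorMul univ fun x => (φ x : ℝ)) := by
    have h2 := (hl' _ (sub_mem hb hL.1)).trans
      (upperIntegral_nonpos hE hne hθ hS hT (sub_mem hb hL.1) fun z _ => ?_)
    · rw [map_sub, univ_prod] at h2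
      linarith
    · by_cases hz : z.2 ∈ A
      · have : φ z.2 = 1 := HasOuterApproxClosed.apprSeq_apply_eq_one hA n hz
        simp [indicatorMul, hz, this]
      · simp [indicatorMul, hz]
  refine (ENNReal.ofReal_le_ofReal h1).trans_eq ?_
  rw [← hμ _ hL h0, ofReal_integral_eq_lintegral_ofReal (integrable_of_mem_boundedMeasurable hL.1)
    (Eventually.of_forall h0), lintegral_map (show Measurable fun x => (φ x : ℝ≥0∞) from
      measurable_coe_nnreal_ennreal.comp φ.continuous.measurable) measurable_snd]
  simp [indicatorMul]

end InvariantMeasure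

theorem stmt16
    {Ω X : Type*} [MeasurableSpace Ω]
    (P : MeasureTheory.Measure Ω) [MeasureTheory.IsProbabilityMeasure P] [P.IsComplete]
    [MetricSpace X] [CompactSpace X] [MeasurableSpace X] [BorelSpace X]
    (θ : Ω → Ω) (hθ : MeasureTheory.MeasurePreserving θ P P)
    (E : Set (Ω × X)) (hE : MeasurableSet E)
    (hEne : ∀ ω, (fiber E ω).Nonempty) (hEcp : ∀ ω, IsCompact (fiber E ω))
    (T : Ω → X → X) (hTm : Measurable fun p : Ω × X => T p.1 p.2)
    (hTmap : ∀ᵐ ω ∂P, Set.MapsTo (T ω) (fiber E ω) (fiber E (θ ω)))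
    (hTc : ∀ᵐ ω ∂P, ContinuousOn (T ω) (fiber E ω))
    (E' : Set X) (hE' : IsClosed E') :
    ∫⁻ ω, ENNReal.ofReal (ocap T θ E E' ω) ∂P =
      ⨆ (μ : MeasureTheory.Measure (Ω × X)) (_ : MeasureTheory.IsProbabilityMeasure μ)
        (_ : μ.map Prod.fst = P) (_ : μ E = 1)
        (_ : μ.map (fun p : Ω × X => (θ p.1, T p.1 p.2)) = μ),
        μ (Set.univ ×ˢ E') := by
  have hS : Measurable (skew T θ) := measurable_skew hθ.measurable hTm
  have hAm : MeasurableSet ((univ : Set Ω) ×ˢ E') := MeasurableSet.univ.prod hE'.measurableSet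
  have hfm : Measurable (((univ : Set Ω) ×ˢ E').indicator (1 : Ω × X → ℝ)) :=
    (indicator_one_mem_boundedMeasurable hAm).1
  simp_rw [ocap_eq_limsup_fiberSup hEne]
  refine le_antisymm ?_ ?_
  · obtain ⟨μ, hprob, hmap, hμE, hinv, hμ⟩ :=
      exists_invariant_measure_upperIntegral_le hE hEne hEcp hθ hS hTmap hTc hE'
    refine le_trans ?_ (hμ.trans (le_iSup_of_le μ (le_iSup_of_le hprob (le_iSup_of_le hmap
      (le_iSup_of_le hμE (le_iSup_of_le hinv.map_eq le_rfl))))))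
    have hIcc (ω : Ω) := limsup_mem_Icc fun n => fiberSup_mem_Icc hEne
      (birkhoffAverage_mem_Icc (θ := skew T θ) le_rfl zero_le_one
        (indicator_one_mem_Icc (univ ×ˢ E')) n) ω
    rw [← ofReal_integral_eq_lintegral_ofReal (integrable_of_mem_Icc (measurable_limsup_fiberSup P
      hE hEne hS (indicator_one_mem_boundedMeasurable hAm)) hIcc)
      (Eventually.of_forall fun ω => (hIcc ω).1)]
    exact ENNReal.ofReal_le_ofReal
      (integral_limsup_fiberSup_le hE hEne hθ hS hTmap hfm (indicator_one_mem_Icc _))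
  · refine iSup_le fun μ => iSup_le fun hprob => iSup_le fun hmap => iSup_le fun hμE =>
      iSup_le fun hinv => le_trans (le_of_eq ?_) (lintegral_le_lintegral_limsup_fiberSup hE hEne
        ⟨hS, hinv⟩ hmap hμE hfm (indicator_one_mem_Icc _))
    rw [← lintegral_indicator_one hAm]
    refine lintegral_congr fun z => ?_
    by_cases hz : z ∈ (univ : Set Ω) ×ˢ E' <;> simp [hz]
end
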